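/- arXiv:2304.13528 — 4 statements merged into one kernel-verified Lean document; each statement's English description precedes it below -/
import Mathlib

section
/- Let 0 < a < 1, b = 0 and c > 0, and let y be a 2π-periodic solution of y′(x) = c·cos x·y(x)² + (sin x − a)·y(x)³ with y(x) > 0 for all x. Then ∫₀^{2π} cos x · y(x) dx < 0; equivalently, ∫₀^{2π} (2c·cos x·y(x) + 3(sin x − a)·y(x)²) dx > 0, so every such periodic solution is hyperbolic and unstable. -/
open Real

/-- The difference `1 / y x - 1 / y (π - x)` of the reciprocal of a solution and its reflection
has derivative `(a - sin x) (y x + y (π - x))`. -/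
lemma hasDerivAt_inv_sub_inv_reflect {a c : ℝ} {y : ℝ → ℝ}
    (hsol : ∀ x : ℝ, HasDerivAt y
      (c * Real.cos x * (y x) ^ 2 + (Real.sin x - a) * (y x) ^ 3) x)
    (hpos : ∀ x : ℝ, 0 < y x) (x : ℝ) :
    HasDerivAt (fun t => (y t)⁻¹ - (y (π - t))⁻¹)
      ((a - Real.sin x) * (y x + y (π - x))) x := by
  have h₁ := (hsol x).fun_inv (hpos x).ne'
  have h₂ := ((hsol (π - x)).comp_const_sub π x).fun_inv (hpos (π - x)).ne'
  refine (h₁.sub h₂).congr_deriv ?_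
  have := (hpos x).ne'
  have := (hpos (π - x)).ne'
  rw [Real.cos_pi_sub, Real.sin_pi_sub]
  field_simp
  ring

/-- A positive periodic solution is smaller at `x` than at `π - x`, for `|x| < π / 2`. -/
lemma lt_reflect_of_mem_Ioo {a c : ℝ} {y : ℝ → ℝ}
    (hsol : ∀ x : ℝ, HasDerivAt y
      (c * Real.cos x * (y x) ^ 2 + (Real.sin x - a) * (y x) ^ 3) x)
    (hper : ∀ x : ℝ, y (x + 2 * Real.pi) = y x)
    (hpos : ∀ x : ℝ, 0 < y x) {x : ℝ} (hx : x ∈ Set.Ioo (-(π / 2)) (π / 2)) :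
    y x < y (π - x) := by
  have hd := hasDerivAt_inv_sub_inv_reflect hsol hpos
  set w : ℝ → ℝ := fun t => (y t)⁻¹ - (y (π - t))⁻¹ with hw
  have hcont : Continuous w := continuous_iff_continuousAt.2 fun t => (hd t).continuousAt
  suffices h : 0 < w x from (inv_lt_inv₀ (hpos _) (hpos _)).1 (sub_pos.1 h)
  obtain ⟨hx₁, hx₂⟩ := hx
  have hsum (t : ℝ) : 0 < y t + y (π - t) := add_pos (hpos _) (hpos _)
  rcases le_or_gt (Real.sin x) a with hs | hs
  · have h0 : w (-(π / 2)) = 0 := by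
      have := hper (-(π / 2))
      rw [show -(π / 2) + 2 * π = π - -(π / 2) by ring] at this
      simp only [hw, this, sub_self]
    have hmono : StrictMonoOn w (Set.Icc (-(π / 2)) x) := by
      refine strictMonoOn_of_deriv_pos (convex_Icc _ _) hcont.continuousOn fun t ht => ?_
      rw [interior_Icc] at ht
      rw [(hd t).deriv]
      have := Real.sin_lt_sin_of_lt_of_le_pi_div_two ht.1.le hx₂.le ht.2
      exact mul_pos (by linarith) (hsum t)
    rw [← h0]
    exact hmono (Set.left_mem_Icc.2 hx₁.le) (Set.right_mem_Icc.2 hx₁.le) hx₁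
  · have h0 : w (π / 2) = 0 := by
      simp only [hw, sub_half, sub_self]
    have hanti : StrictAntiOn w (Set.Icc x (π / 2)) := by
      refine strictAntiOn_of_deriv_neg (convex_Icc _ _) hcont.continuousOn fun t ht => ?_
      rw [interior_Icc] at ht
      rw [(hd t).deriv]
      have := Real.sin_lt_sin_of_lt_of_le_pi_div_two hx₁.le ht.2.le ht.1
      exact mul_neg_of_neg_of_pos (by linarith) (hsum t)
    rw [← h0]
    exact hanti (Set.left_mem_Icc.2 hx₂.le) (Set.right_mem_Icc.2 hx₂.le) hx₂

/-- Folding the period `[-π/2, 3π/2]` along the reflection `x ↦ π - x`. -/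
lemma integral_cos_mul_eq_neg_integral_reflect {y : ℝ → ℝ} (hy : Continuous y)
    (hper : ∀ x : ℝ, y (x + 2 * Real.pi) = y x) :
    ∫ x in (0 : ℝ)..(2 * π), Real.cos x * y x =
      -∫ x in (-(π / 2))..(π / 2), Real.cos x * (y (π - x) - y x) := by
  have hf : Continuous fun x => Real.cos x * y x := Real.continuous_cos.mul hy
  have hp : Function.Periodic (fun x => Real.cos x * y x) (2 * π) := fun x => by
    simp only [hper, Real.cos_add_two_pi]
  have hshift := hp.intervalIntegral_add_eq 0 (-(π / 2))
  rw [zero_add] at hshift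
  have hrefl := intervalIntegral.integral_comp_sub_left (a := -(π / 2)) (b := π / 2)
    (fun x => Real.cos x * y x) π
  rw [sub_half, show π - -(π / 2) = -(π / 2) + 2 * π by ring] at hrefl
  rw [hshift, ← intervalIntegral.integral_add_adjacent_intervals
    (hf.intervalIntegrable _ (π / 2)) (hf.intervalIntegrable _ _), ← hrefl,
    ← intervalIntegral.integral_add (hf.intervalIntegrable _ _)
      (Continuous.intervalIntegrable (by fun_prop) _ _),
    ← intervalIntegral.integral_neg]
  refine intervalIntegral.integral_congr fun x _ => ?_
  simp only [Real.cos_pi_sub]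
  ring

/-- The logarithmic derivative of a positive periodic solution has zero mean. -/
lemma integral_logDeriv_eq_zero {a c : ℝ} {y : ℝ → ℝ}
    (hsol : ∀ x : ℝ, HasDerivAt y
      (c * Real.cos x * (y x) ^ 2 + (Real.sin x - a) * (y x) ^ 3) x)
    (hper : ∀ x : ℝ, y (x + 2 * Real.pi) = y x)
    (hpos : ∀ x : ℝ, 0 < y x) :
    ∫ x in (0 : ℝ)..(2 * π), (c * Real.cos x * y x + (Real.sin x - a) * (y x) ^ 2) = 0 := by
  have hy : Continuous y := continuous_iff_continuousAt.2 fun t => (hsol t).continuousAt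
  have hd (x : ℝ) : HasDerivAt (fun t => Real.log (y t))
      (c * Real.cos x * y x + (Real.sin x - a) * (y x) ^ 2) x := by
    refine ((hsol x).log (hpos x).ne').congr_deriv ?_
    have := (hpos x).ne'
    field_simp
  rw [intervalIntegral.integral_eq_sub_of_hasDerivAt (fun x _ => hd x)
    (Continuous.intervalIntegrable (by fun_prop) _ _)]
  have := hper 0
  rw [zero_add] at this
  rw [this, sub_self]

/-- For `0 < a < 1`, `b = 0`, `c > 0`, every positive 2π-periodic solution of
`y′ = c·cos x·y² + (sin x − a)·y³` satisfies `∫₀^{2π} cos x · y(x) dx < 0`,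
equivalently `∫₀^{2π} (2c·cos x·y + 3(sin x − a)·y²) dx > 0`, hence is
hyperbolic and unstable. -/
theorem abel_positive_periodic_solution_unstable
    (a c : ℝ) (ha0 : 0 < a) (ha1 : a < 1) (hc : 0 < c)
    (y : ℝ → ℝ)
    (hsol : ∀ x : ℝ, HasDerivAt y
      (c * Real.cos x * (y x) ^ 2 + (Real.sin x - a) * (y x) ^ 3) x)
    (hper : ∀ x : ℝ, y (x + 2 * Real.pi) = y x)
    (hpos : ∀ x : ℝ, 0 < y x) :
    (∫ x in (0:ℝ)..(2 * Real.pi), Real.cos x * y x) < 0 ∧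
    0 < ∫ x in (0:ℝ)..(2 * Real.pi),
      (2 * c * Real.cos x * y x + 3 * (Real.sin x - a) * (y x) ^ 2) := by
  have hy : Continuous y := continuous_iff_continuousAt.2 fun t => (hsol t).continuousAt
  have hneg : (∫ x in (0 : ℝ)..(2 * π), Real.cos x * y x) < 0 := by
    rw [integral_cos_mul_eq_neg_integral_reflect hy hper, neg_lt_zero]
    refine intervalIntegral.intervalIntegral_pos_of_pos_on
      (Continuous.intervalIntegrable (by fun_prop) _ _) (fun x hx => ?_)
      (by linarith [Real.pi_pos])
    exact mul_pos (Real.cos_pos_of_mem_Ioo hx)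
      (sub_pos.2 (lt_reflect_of_mem_Ioo hsol hper hpos hx))
  refine ⟨hneg, ?_⟩
  have hsplit : (∫ x in (0 : ℝ)..(2 * π),
      (2 * c * Real.cos x * y x + 3 * (Real.sin x - a) * (y x) ^ 2)) =
      3 * (∫ x in (0 : ℝ)..(2 * π), (c * Real.cos x * y x + (Real.sin x - a) * (y x) ^ 2)) -
        c * ∫ x in (0 : ℝ)..(2 * π), Real.cos x * y x := by
    rw [← intervalIntegral.integral_const_mul, ← intervalIntegral.integral_const_mul,
      ← intervalIntegral.integral_sub (Continuous.intervalIntegrable (by fun_prop) _ _)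
        (Continuous.intervalIntegrable (by fun_prop) _ _)]
    refine intervalIntegral.integral_congr fun x _ => ?_
    ring
  rw [hsplit, integral_logDeriv_eq_zero hsol hper hpos, mul_zero, zero_sub, neg_pos]
  exact mul_neg_of_pos_of_neg hc hneg
end

section
/- Let 0 ≤ a < 1, c > 0, 0 ≤ b < c·√(1 − a²), and let y be a 2π-periodic solution of (E) with y(x) > 0 for all x satisfying ∫₀^{2π} (2(b + c·cos x)·y(x) + 3(sin x − a)·y(x)²) dx = 0. Let x* be a point at which y attains its maximum over ℝ. Then ∫_{x*}^{x*+2π} y′(x) · exp( ∫_{x*}^{x} (sin u − a)·y(u)² du ) dx < 0. (Consequently the second derivative of the Poincaré return map at this periodic solution is strictly positive, so the periodic solution has multiplicity exactly two and is lower stable.) -/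
open Real

theorem cos_lt_of_cos_le {c u v p q h k : ℝ} (hc : 0 < c) (hR : u ^ 2 + v ^ 2 < c ^ 2)
    (hq0 : 0 < q) (hq : c * cos q + u * cos p + v * sin p ≤ 0)
    (hk : |h| < k) (hqk : q + k < π) :
    c * cos (q + k) + u * cos (p + h) + v * sin (p + h) < 0 := by
  set X := u * cos p + v * sin p with hX
  set Y := v * cos p - u * sin p with hY
  have hXY : X ^ 2 + Y ^ 2 = u ^ 2 + v ^ 2 := by
    rw [hX, hY]; linear_combination (u ^ 2 + v ^ 2) * sin_sq_add_cos_sq p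
  have hXc : |X| ≤ c := abs_le_of_sq_le_sq (by nlinarith [sq_nonneg Y]) hc.le
  obtain ⟨hX1, hX2⟩ := abs_le.1 hXc
  set r := arccos (-X / c) with hr
  have hcos : c * cos r = -X := by
    rw [hr, cos_arccos (by rw [le_div_iff₀ hc]; linarith) (by rw [div_le_iff₀ hc]; linarith)]
    field_simp
  have hr0 : 0 ≤ r := arccos_nonneg _
  have hrpi : r ≤ π := arccos_le_pi _
  have hsin0 : 0 ≤ sin r := sin_nonneg_of_nonneg_of_le_pi hr0 hrpi
  have hsin : |Y| ≤ c * sin r := by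
    refine abs_le_of_sq_le_sq ?_ (by positivity)
    have : (c * sin r) ^ 2 + (c * cos r) ^ 2 = c ^ 2 := by
      linear_combination c ^ 2 * sin_sq_add_cos_sq r
    rw [hcos] at this
    nlinarith
  have hk0 : 0 ≤ |h| := abs_nonneg h
  have hrq : r ≤ q := by
    by_contra! hlt
    have := cos_lt_cos_of_nonneg_of_le_pi hq0.le hrpi hlt
    nlinarith
  have h1 : cos (q + k) < cos (r + |h|) :=
    cos_lt_cos_of_nonneg_of_le_pi (by positivity) hqk.le (by linarith)
  have h2 : c * cos (r + |h|) + X * cos h + Y * sin h ≤ 0 := by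
    have e : c * cos (r + |h|) = -X * cos h - c * sin r * sin |h| := by
      rw [cos_add, cos_abs]; linear_combination cos h * hcos
    have hs : 0 ≤ sin |h| := sin_nonneg_of_nonneg_of_le_pi hk0 (by linarith)
    have hs' : |sin h| = sin |h| := by
      rcases abs_cases h with ⟨e1, _⟩ | ⟨e1, _⟩
      · rw [e1] at hs ⊢; exact abs_of_nonneg hs
      · rw [e1, sin_neg] at hs ⊢
        exact abs_of_nonpos (by linarith)
    have h3 : Y * sin h ≤ c * sin r * sin |h| := by
      calc Y * sin h ≤ |Y * sin h| := le_abs_self _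
        _ = |Y| * sin |h| := by rw [abs_mul, hs']
        _ ≤ _ := mul_le_mul_of_nonneg_right hsin hs
    linarith
  have h4 : u * cos (p + h) + v * sin (p + h) = X * cos h + Y * sin h := by
    rw [cos_add, sin_add]; ring
  nlinarith

/-- The oriented area spanned by the points of the ellipse `x ↦ (b + c cos x, sin x - a)` with
parameters `s` and `t`. -/
theorem ellipse_cross_eq (a b c s t : ℝ) :
    (b + c * cos s) * (sin t - a) - (b + c * cos t) * (sin s - a) =
      2 * sin ((t - s) / 2) * (c * cos ((t - s) / 2) + b * cos ((s + t) / 2)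
        + -(a * c) * sin ((s + t) / 2)) := by
  obtain ⟨p, hp⟩ : ∃ p, p = (s + t) / 2 := ⟨_, rfl⟩
  obtain ⟨q, hq⟩ : ∃ q, q = (t - s) / 2 := ⟨_, rfl⟩
  have hs : s = p - q := by linarith
  have ht : t = p + q := by linarith
  rw [← hp, ← hq, hs, ht, sin_add, sin_sub, cos_add, cos_sub]
  linear_combination 2 * c * sin q * cos q * sin_sq_add_cos_sq p

theorem ellipse_cross_neg {a b c s t s' t' : ℝ} (hc : 0 < c)
    (hR : b ^ 2 + (a * c) ^ 2 < c ^ 2) (hs : s' < s) (hst : s < t) (ht : t < t')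
    (hlt : t' < s' + 2 * π)
    (h : (b + c * cos s) * (sin t - a) - (b + c * cos t) * (sin s - a) ≤ 0) :
    (b + c * cos s') * (sin t' - a) - (b + c * cos t') * (sin s' - a) < 0 := by
  rw [ellipse_cross_eq] at h ⊢
  have h1 : 0 < sin ((t - s) / 2) := sin_pos_of_pos_of_lt_pi (by linarith) (by linarith)
  have h2 : 0 < sin ((t' - s') / 2) := sin_pos_of_pos_of_lt_pi (by linarith) (by linarith)
  refine mul_neg_of_pos_of_neg (by positivity) ?_
  have h3 := cos_lt_of_cos_le (h := (s' + t') / 2 - (s + t) / 2)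
    (k := (t' - s') / 2 - (t - s) / 2) hc (by simpa using hR) (by linarith : 0 < (t - s) / 2)
    (nonpos_of_mul_nonpos_right h (by positivity))
    (by rw [abs_lt]; constructor <;> linarith) (by linarith)
  simpa using h3

open Set in
theorem exists_inverse_of_injOn_Icc {f f' : ℝ → ℝ} {p q m M : ℝ}
    (hf : ∀ x, HasDerivAt f (f' x) x) (hne : ∀ x ∈ Ioo p q, f' x ≠ 0)
    (hinj : InjOn f (Icc p q)) (himg : f '' Icc p q = Icc m M)
    (hp : f p ∉ Ioo m M) (hq : f q ∉ Ioo m M) :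
    ∃ g : ℝ → ℝ, ContinuousOn g (Icc m M) ∧ (∀ x ∈ Icc p q, g (f x) = x) ∧
      ∀ v ∈ Ioo m M, g v ∈ Ioo p q ∧ f (g v) = v ∧ HasDerivAt g (f' (g v))⁻¹ v := by
  have hfc : Continuous f := continuous_iff_continuousAt.2 fun x => (hf x).continuousAt
  have hleft : ∀ x ∈ Icc p q, Function.invFunOn f (Icc p q) (f x) = x :=
    fun x hx => hinj.leftInvOn_invFunOn hx
  refine ⟨Function.invFunOn f (Icc p q), ?_, hleft, ?_⟩
  all_goals set g := Function.invFunOn f (Icc p q)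
  all_goals
    have hcont : ContinuousOn g (Icc m M) := by
      rw [continuousOn_iff_isClosed]
      intro t ht
      refine ⟨f '' (Icc p q ∩ t), ((isCompact_Icc.inter_right ht).image hfc).isClosed, ?_⟩
      rw [← himg]
      ext v
      constructor
      · rintro ⟨hv, x, hx, rfl⟩
        rw [mem_preimage, hleft x hx] at hv
        exact ⟨⟨x, ⟨hx, hv⟩, rfl⟩, x, hx, rfl⟩
      · rintro ⟨⟨x, ⟨hx, hxt⟩, rfl⟩, h⟩
        exact ⟨by rwa [mem_preimage, hleft x hx], h⟩
  · exact hcont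
  · have hright : ∀ v ∈ Icc m M, g v ∈ Icc p q ∧ f (g v) = v := by
      rw [← himg]
      rintro _ ⟨x, hx, rfl⟩
      rw [hleft x hx]
      exact ⟨hx, rfl⟩
    intro v hv
    obtain ⟨hm, he⟩ := hright v (Ioo_subset_Icc_self hv)
    have hmem : g v ∈ Ioo p q := by
      refine ⟨lt_of_le_of_ne hm.1 fun h => hp ?_, lt_of_le_of_ne hm.2 fun h => hq ?_⟩
      · rwa [h, he]
      · rwa [← h, he]
    refine ⟨hmem, he, HasDerivAt.of_local_left_inverse
      (hcont.continuousAt (Icc_mem_nhds hv.1 hv.2)) (hf _) (hne _ hmem) ?_⟩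
    filter_upwards [Icc_mem_nhds hv.1 hv.2] with w hw using (hright w hw).2

open Set MeasureTheory in
theorem integral_mul_exp_neg_of_unimodal {y F L l : ℝ → ℝ} {x₀ xm x₁ : ℝ}
    (h0 : x₀ < xm) (h1 : xm < x₁) (hy : ∀ x, HasDerivAt y (F x) x) (hF : Continuous F)
    (hL : ∀ x, HasDerivAt L (l x) x) (hneg : ∀ x ∈ Ioo x₀ xm, F x < 0)
    (hpos : ∀ x ∈ Ioo xm x₁, 0 < F x) (hyend : y x₁ = y x₀) (hLend : L x₁ = L x₀)
    (hcross : ∀ t ∈ Ioo x₀ xm, ∀ i ∈ Ioo xm x₁, ∀ t' ∈ Ioo x₀ xm, ∀ i' ∈ Ioo xm x₁,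
      y t = y i → y t' = y i' → t' < t → i < i' →
      0 ≤ l i / F i - l t / F t → 0 < l i' / F i' - l t' / F t') :
    ∫ x in x₀..x₁, F x * exp (L x) < 0 := by
  have hyc : Continuous y := continuous_iff_continuousAt.2 fun x => (hy x).continuousAt
  have hLc : Continuous L := continuous_iff_continuousAt.2 fun x => (hL x).continuousAt
  have hanti : StrictAntiOn y (Icc x₀ xm) :=
    strictAntiOn_of_hasDerivWithinAt_neg (convex_Icc _ _) hyc.continuousOn
      (fun x _ => (hy x).hasDerivWithinAt) (by rwa [interior_Icc])
  have hmono : StrictMonoOn y (Icc xm x₁) :=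
    strictMonoOn_of_hasDerivWithinAt_pos (convex_Icc _ _) hyc.continuousOn
      (fun x _ => (hy x).hasDerivWithinAt) (by rwa [interior_Icc])
  have l0 := left_mem_Icc.2 h0.le
  have r0 := right_mem_Icc.2 h0.le
  have l1 := left_mem_Icc.2 h1.le
  have r1 := right_mem_Icc.2 h1.le
  have hlt : y xm < y x₀ := hanti l0 r0 h0
  obtain ⟨gt, hgtc, hgtl, hgt⟩ := exists_inverse_of_injOn_Icc (m := y xm) (M := y x₀) hy
    (fun x hx => (hneg x hx).ne) hanti.injOn
    (Subset.antisymm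
      (by rintro _ ⟨x, hx, rfl⟩
          exact ⟨hanti.antitoneOn hx r0 hx.2, hanti.antitoneOn l0 hx hx.1⟩)
      (intermediate_value_Icc' h0.le hyc.continuousOn)) (by simp) (by simp)
  obtain ⟨gi, hgic, hgil, hgi⟩ := exists_inverse_of_injOn_Icc (m := y xm) (M := y x₀) hy
    (fun x hx => (hpos x hx).ne') hmono.injOn
    (Subset.antisymm
      (by rintro _ ⟨x, hx, rfl⟩
          exact ⟨hmono.monotoneOn l1 hx hx.1, hyend ▸ hmono.monotoneOn hx r1 hx.2⟩)
      (hyend ▸ intermediate_value_Icc h1.le hyc.continuousOn)) (by simp) (by simp [hyend])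
  have hD : ∀ v ∈ Ioo (y xm) (y x₀), L (gi v) < L (gt v) := by
    intro v hv
    by_contra! hle
    have hder : ∀ w ∈ Ioo (y xm) (y x₀), HasDerivAt (fun w => L (gi w) - L (gt w))
        (l (gi w) / F (gi w) - l (gt w) / F (gt w)) w := fun w hw =>
      ((hL _).comp w (hgi w hw).2.2).sub ((hL _).comp w (hgt w hw).2.2)
    have hcont : ContinuousOn (fun w => L (gi w) - L (gt w)) (Icc (y xm) (y x₀)) :=
      (hLc.comp_continuousOn hgic).sub (hLc.comp_continuousOn hgtc)
    obtain ⟨η, hη, eη⟩ := exists_hasDerivAt_eq_slope _ _ hv.1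
      (hcont.mono (Icc_subset_Icc le_rfl hv.2.le))
      (fun w hw => hder w ⟨hw.1, hw.2.trans hv.2⟩)
    obtain ⟨ξ, hξ, eξ⟩ := exists_hasDerivAt_eq_slope _ _ hv.2
      (hcont.mono (Icc_subset_Icc hv.1.le le_rfl))
      (fun w hw => hder w ⟨hv.1.trans hw.1, hw.2⟩)
    have hη' : η ∈ Ioo (y xm) (y x₀) := ⟨hη.1, hη.2.trans hv.2⟩
    have hξ' : ξ ∈ Ioo (y xm) (y x₀) := ⟨hv.1.trans hξ.1, hξ.2⟩
    have hηξ : η < ξ := hη.2.trans hξ.1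
    have e1 : gi (y x₀) = x₁ := by rw [← hyend]; exact hgil _ r1
    simp only [hgil _ l1, hgtl _ r0, sub_self, sub_zero] at eη
    simp only [e1, hgtl _ l0, hLend, sub_self, zero_sub] at eξ
    obtain ⟨ta, tb, -⟩ := hgt η hη'
    obtain ⟨ia, ib, -⟩ := hgi η hη'
    obtain ⟨ta', tb', -⟩ := hgt ξ hξ'
    obtain ⟨ia', ib', -⟩ := hgi ξ hξ'
    have h := hcross _ ta _ ia _ ta' _ ia' (tb.trans ib.symm) (tb'.trans ib'.symm)
      ((hanti.lt_iff_gt (Ioo_subset_Icc_self ta) (Ioo_subset_Icc_self ta')).1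
        (by rwa [tb, tb']))
      ((hmono.lt_iff_lt (Ioo_subset_Icc_self ia) (Ioo_subset_Icc_self ia')).1
        (by rwa [ib, ib']))
      (by rw [eη]; exact div_nonneg (by linarith) (by linarith [hv.1]))
    rw [eξ] at h
    exact absurd h (not_lt.2 (div_nonpos_of_nonpos_of_nonneg (by linarith) (by linarith [hv.2])))
  have hint : Continuous fun x => F x * exp (L x) := hF.mul (continuous_exp.comp hLc)
  rw [← intervalIntegral.integral_add_adjacent_intervals (hint.intervalIntegrable x₀ xm)
    (hint.intervalIntegrable xm x₁)]
  have ht : ∫ x in x₀..xm, F x * exp (L x) = ∫ v in y x₀..y xm, exp (L (gt v)) := by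
    rw [← intervalIntegral.integral_comp_mul_deriv_of_deriv_nonpos hyc.continuousOn
      (fun x _ => hy x) (by
        rw [min_eq_left h0.le, max_eq_right h0.le]
        exact fun x hx => (hneg x hx).le)]
    refine intervalIntegral.integral_congr fun x hx => ?_
    rw [uIcc_of_le h0.le] at hx
    simp only [Function.comp_apply, hgtl x hx, mul_comm]
  have hi : ∫ x in xm..x₁, F x * exp (L x) = ∫ v in y xm..y x₀, exp (L (gi v)) := by
    rw [← hyend, ← intervalIntegral.integral_comp_mul_deriv_of_deriv_nonneg hyc.continuousOn
      (fun x _ => hy x) (by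
        rw [min_eq_left h1.le, max_eq_right h1.le]
        exact fun x hx => (hpos x hx).le)]
    refine intervalIntegral.integral_congr fun x hx => ?_
    rw [uIcc_of_le h1.le] at hx
    simp only [Function.comp_apply, hgil x hx, mul_comm]
  have hct : ContinuousOn (fun v => exp (L (gt v))) (Icc (y xm) (y x₀)) :=
    continuous_exp.comp_continuousOn (hLc.comp_continuousOn hgtc)
  have hci : ContinuousOn (fun v => exp (L (gi v))) (Icc (y xm) (y x₀)) :=
    continuous_exp.comp_continuousOn (hLc.comp_continuousOn hgic)
  have hit := hct.intervalIntegrable_of_Icc (μ := volume) hlt.le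
  have hii := hci.intervalIntegrable_of_Icc (μ := volume) hlt.le
  have key := intervalIntegral.intervalIntegral_pos_of_pos_on (hit.sub hii)
    (fun v hv => sub_pos.2 (exp_lt_exp.2 (hD v hv))) hlt
  rw [intervalIntegral.integral_sub hit hii] at key
  rw [ht, hi, intervalIntegral.integral_symm]
  linarith

open Set in
theorem exists_arcs_sin_sub {a b c : ℝ} (ha0 : 0 ≤ a) (ha1 : a < 1) (hb0 : 0 ≤ b)
    (hb : b < c * √(1 - a ^ 2)) (z : ℝ) :
    ∃ α γ : ℝ, z ∈ Ico α (α + 2 * π) ∧ γ ∈ Ioo α (α + 2 * π) ∧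
      (sin α = a ∧ 0 < b + c * cos α) ∧ (sin γ = a ∧ b + c * cos γ < 0) ∧
      (∀ x ∈ Ioo α γ, 0 < sin x - a) ∧ ∀ x ∈ Ioo γ (α + 2 * π), sin x - a < 0 := by
  obtain ⟨θ, hθ⟩ : ∃ θ, θ = arcsin a := ⟨_, rfl⟩
  have hsin : sin θ = a := by rw [hθ, sin_arcsin (by linarith) ha1.le]
  have hcos : cos θ = √(1 - a ^ 2) := by rw [hθ, cos_arcsin]
  have hθ0 : 0 ≤ θ := by rw [hθ]; exact arcsin_nonneg.2 ha0
  have hθ1 : θ < π / 2 := by rw [hθ]; exact arcsin_lt_pi_div_two.2 ha1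
  have hcpos : 0 < c * cos θ := by rw [hcos]; exact hb0.trans_lt hb
  obtain ⟨m, hm, -⟩ := existsUnique_add_zsmul_mem_Ico two_pi_pos z θ
  simp only [zsmul_eq_mul] at hm
  have hfac : ∀ x, sin x - a =
      2 * sin ((x + m * (2 * π) - θ) / 2) * cos ((x + m * (2 * π) + θ) / 2) := fun x => by
    rw [← sin_sub_sin, hsin, sin_add_int_mul_two_pi]
  refine ⟨θ - m * (2 * π), π - θ - m * (2 * π), ⟨by linarith [hm.1], by linarith [hm.2]⟩,
    ⟨by linarith, by linarith⟩, ⟨?_, ?_⟩, ⟨?_, ?_⟩, fun x hx => ?_, fun x hx => ?_⟩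
  · rw [sin_sub_int_mul_two_pi, hsin]
  · rw [cos_sub_int_mul_two_pi]; linarith
  · rw [sin_sub_int_mul_two_pi, sin_pi_sub, hsin]
  · rw [cos_sub_int_mul_two_pi, cos_pi_sub, hcos]; linarith
  · rw [hfac]
    have h1 := sin_pos_of_pos_of_lt_pi (x := (x + m * (2 * π) - θ) / 2)
      (by linarith [hx.1]) (by linarith [hx.2])
    have h2 := cos_pos_of_mem_Ioo (x := (x + m * (2 * π) + θ) / 2)
      ⟨by linarith [hx.1], by linarith [hx.2]⟩
    positivity
  · rw [hfac]
    have h1 := sin_pos_of_pos_of_lt_pi (x := (x + m * (2 * π) - θ) / 2)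
      (by linarith [hx.1]) (by linarith [hx.2])
    have h2 := cos_neg_of_pi_div_two_lt_of_lt (x := (x + m * (2 * π) + θ) / 2)
      (by linarith [hx.1]) (by linarith [hx.2])
    exact mul_neg_of_pos_of_neg (by positivity) h2

/-- A weighted distance from `y` to the nullcline `y = -(b + c cos x) / (sin x - a)` is strictly
decreasing wherever `sin x ≠ a`. -/
theorem abel_nullcline_strictAntiOn {a b c : ℝ} {y L : ℝ → ℝ} (hc : 0 < c)
    (hR : b ^ 2 + (a * c) ^ 2 < c ^ 2)
    (hsol : ∀ x, HasDerivAt y ((b + c * cos x) * (y x) ^ 2 + (sin x - a) * (y x) ^ 3) x)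
    (hL : ∀ x, HasDerivAt L ((sin x - a) * (y x) ^ 2) x) {s : Set ℝ} (hs : Convex ℝ s)
    (hB : ∀ x ∈ s, sin x - a ≠ 0) :
    StrictAntiOn (fun x => ((b + c * cos x) / (sin x - a) + y x) * exp (-L x)) s := by
  have hder : ∀ x ∈ s, HasDerivAt
      (fun x => ((b + c * cos x) / (sin x - a) + y x) * exp (-L x))
      (-(exp (-L x) * (c - a * c * sin x + b * cos x) / (sin x - a) ^ 2)) x := fun x hx => by
    have h0 := hB x hx
    have h1 := ((((hasDerivAt_cos x).const_mul c).const_add b).div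
      ((hasDerivAt_sin x).sub_const a) h0).add (hsol x)
    refine (h1.mul (hL x).neg.exp).congr_deriv ?_
    simp only [Pi.add_apply, Pi.div_apply, Pi.neg_apply]
    field_simp
    linear_combination -c * sin_sq_add_cos_sq x
  refine strictAntiOn_of_hasDerivWithinAt_neg hs
    (fun x hx => (hder x hx).continuousAt.continuousWithinAt)
    (fun x hx => (hder x (interior_subset hx)).hasDerivWithinAt) fun x hx => ?_
  have h0 := hB x (interior_subset hx)
  have h1 : a * c * sin x - b * cos x < c := by
    refine lt_of_abs_lt (abs_lt_of_sq_lt_sq ?_ hc.le)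
    have : (a * c * sin x - b * cos x) ^ 2 + (a * c * cos x + b * sin x) ^ 2 =
        b ^ 2 + (a * c) ^ 2 := by
      linear_combination (b ^ 2 + (a * c) ^ 2) * sin_sq_add_cos_sq x
    nlinarith [sq_nonneg (a * c * cos x + b * sin x)]
  have h2 : 0 < c - a * c * sin x + b * cos x := by linarith
  rw [neg_lt_zero]
  positivity

open Set in
theorem abel_unimodal {a b c : ℝ} {y L : ℝ → ℝ} (ha0 : 0 ≤ a) (ha1 : a < 1) (hc : 0 < c)
    (hb0 : 0 ≤ b) (hb : b < c * √(1 - a ^ 2)) (hR : b ^ 2 + (a * c) ^ 2 < c ^ 2)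
    (hsol : ∀ x, HasDerivAt y ((b + c * cos x) * (y x) ^ 2 + (sin x - a) * (y x) ^ 3) x)
    (hL : ∀ x, HasDerivAt L ((sin x - a) * (y x) ^ 2) x)
    (hper : ∀ x, y (x + 2 * π) = y x) (hpos : ∀ x, 0 < y x)
    {z : ℝ} (hmax : ∀ x, y x ≤ y z) :
    ∃ xm ∈ Ioo z (z + 2 * π), (∀ x ∈ Ioo z xm, b + c * cos x + (sin x - a) * y x < 0) ∧
      ∀ x ∈ Ioo xm (z + 2 * π), 0 < b + c * cos x + (sin x - a) * y x := by
  have hyc : Continuous y := continuous_iff_continuousAt.2 fun x => (hsol x).continuousAt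
  obtain ⟨w, hw⟩ : ∃ w : ℝ → ℝ, ∀ x, w x = b + c * cos x + (sin x - a) * y x :=
    ⟨fun x => b + c * cos x + (sin x - a) * y x, fun _ => rfl⟩
  simp only [← hw]
  have hwc : Continuous w := by rw [funext hw]; fun_prop
  have hwper : ∀ x, w (x + 2 * π) = w x := fun x => by
    rw [hw, hw, hper, cos_add_two_pi, sin_add_two_pi]
  have hderiv : ∀ x, HasDerivAt y ((y x) ^ 2 * w x) x := fun x =>
    (hsol x).congr_deriv (by rw [hw]; ring)
  have hwz : w z = 0 := by
    have h : IsLocalMax y z := Filter.Eventually.of_forall hmax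
    have := h.hasDerivAt_eq_zero (hderiv z)
    simpa [(hpos z).ne'] using this
  obtain ⟨α, γ, hz, hγ, ⟨hα1, hα2⟩, ⟨hγ1, hγ2⟩, hBpos, hBneg⟩ :=
    exists_arcs_sin_sub ha0 ha1 hb0 hb z
  have hwα : 0 < w α := by rw [hw, hα1]; linarith
  have hwγ : w γ < 0 := by rw [hw, hγ1]; linarith
  have hr : ∀ x, sin x - a ≠ 0 → (b + c * cos x) / (sin x - a) + y x = w x / (sin x - a) :=
    fun x hx => by rw [hw]; field_simp
  have hanti : ∀ p q x x', (∀ x ∈ Ioo p q, sin x - a ≠ 0) → x ∈ Ioo p q → x' ∈ Ioo p q →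
      x < x' → (0 ≤ w x' / (sin x' - a) → 0 < w x / (sin x - a)) ∧
        (w x / (sin x - a) ≤ 0 → w x' / (sin x' - a) < 0) := by
    intro p q x x' hB hx hx' hlt
    have h := abel_nullcline_strictAntiOn hc hR hsol hL (convex_Ioo p q) hB hx hx' hlt
    simp only [hr x (hB x hx), hr x' (hB x' hx')] at h
    have e1 := exp_pos (-L x)
    have e2 := exp_pos (-L x')
    exact ⟨fun h0 => pos_of_mul_pos_left ((mul_nonneg h0 e2.le).trans_lt h) e1.le,
      fun h0 => neg_of_mul_neg_left (h.trans_le (mul_nonpos_of_nonpos_of_nonneg h0 e1.le)) e2.le⟩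
  have hupper : ∀ x x', x ∈ Ioo α γ → x' ∈ Ioo α γ → x < x' →
      (0 ≤ w x' → 0 < w x) ∧ (w x ≤ 0 → w x' < 0) := by
    intro x x' hx hx' hlt
    have h := hanti α γ x x' (fun x hx => (hBpos x hx).ne') hx hx' hlt
    have p1 := hBpos x hx
    have p2 := hBpos x' hx'
    simpa only [le_div_iff₀ p2, lt_div_iff₀ p1, div_le_iff₀ p1, div_lt_iff₀ p2, zero_mul] using h
  have hlower : ∀ x x', x ∈ Ioo γ (α + 2 * π) → x' ∈ Ioo γ (α + 2 * π) → x < x' →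
      (w x' ≤ 0 → w x < 0) ∧ (0 ≤ w x → 0 < w x') := by
    intro x x' hx hx' hlt
    have h := hanti γ (α + 2 * π) x x' (fun x hx => (hBneg x hx).ne) hx hx' hlt
    have p1 := hBneg x hx
    have p2 := hBneg x' hx'
    simpa only [le_div_iff_of_neg p2, lt_div_iff_of_neg p1, div_le_iff_of_neg p1,
      div_lt_iff_of_neg p2, zero_mul] using h
  have hzγ : z ∈ Ioo α γ := by
    refine ⟨lt_of_le_of_ne hz.1 (by rintro rfl; exact hwα.ne' hwz), ?_⟩
    by_contra! hle
    have hlt : γ < z := lt_of_le_of_ne hle (by rintro rfl; exact hwγ.ne hwz)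
    have hmono : StrictMonoOn y (Icc z (α + 2 * π)) :=
      strictMonoOn_of_hasDerivWithinAt_pos (convex_Icc _ _) hyc.continuousOn
        (fun x _ => (hderiv x).hasDerivWithinAt) fun x hx => by
          rw [interior_Icc] at hx
          exact mul_pos (pow_pos (hpos x) 2)
            ((hlower z x ⟨hlt, hz.2⟩ ⟨hlt.trans hx.1, hx.2⟩ hx.1).2 hwz.ge)
    exact absurd (hmono (left_mem_Icc.2 hz.2.le) (right_mem_Icc.2 hz.2.le) hz.2)
      (not_lt.2 (hmax _))
  obtain ⟨xm, hxm, hwm⟩ := intermediate_value_Ioo hγ.2.le hwc.continuousOn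
    (show (0 : ℝ) ∈ Ioo (w γ) (w (α + 2 * π)) from ⟨hwγ, by rwa [hwper]⟩)
  refine ⟨xm, ⟨hzγ.2.trans hxm.1, by linarith [hxm.2, hzγ.1]⟩, fun x hx => ?_, fun x hx => ?_⟩
  · rcases lt_trichotomy x γ with h | rfl | h
    · exact (hupper z x hzγ ⟨hzγ.1.trans hx.1, h⟩ hx.1).2 hwz.le
    · exact hwγ
    · exact (hlower x xm ⟨h, hx.2.trans hxm.2⟩ hxm hx.2).1 hwm.le
  · rcases lt_trichotomy x (α + 2 * π) with h | rfl | h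
    · exact (hlower xm x hxm ⟨hxm.1.trans hx.1, h⟩ hx.1).2 hwm.ge
    · rwa [hwper]
    · rw [← sub_add_cancel x (2 * π), hwper]
      exact (hupper (x - 2 * π) z ⟨by linarith, by linarith [hx.2, hzγ.2]⟩ hzγ
        (by linarith [hx.2])).1 hwz.ge

theorem integral_abel_cubic_coeff_eq_zero {a b c : ℝ} {y : ℝ → ℝ}
    (hsol : ∀ x, HasDerivAt y ((b + c * cos x) * (y x) ^ 2 + (sin x - a) * (y x) ^ 3) x)
    (hper : ∀ x, y (x + 2 * π) = y x) (hpos : ∀ x, 0 < y x)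
    (hcrit : ∫ x in (0 : ℝ)..(2 * π),
      (2 * (b + c * cos x) * y x + 3 * (sin x - a) * (y x) ^ 2) = 0) :
    ∫ x in (0 : ℝ)..(2 * π), (sin x - a) * (y x) ^ 2 = 0 := by
  have hyc : Continuous y := continuous_iff_continuousAt.2 fun x => (hsol x).continuousAt
  have hlog : ∫ x in (0 : ℝ)..(2 * π), ((b + c * cos x) * y x + (sin x - a) * (y x) ^ 2) = 0 := by
    rw [intervalIntegral.integral_eq_sub_of_hasDerivAt (f := fun x => log (y x))
      (fun x _ => ((hsol x).log (hpos x).ne').congr_deriv (by have := (hpos x).ne'; field_simp))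
      (Continuous.intervalIntegrable (by fun_prop) _ _)]
    have := hper 0
    rw [zero_add] at this
    rw [this, sub_self]
  have h : ∀ x, (sin x - a) * (y x) ^ 2 =
      (2 * (b + c * cos x) * y x + 3 * (sin x - a) * (y x) ^ 2)
        - 2 * ((b + c * cos x) * y x + (sin x - a) * (y x) ^ 2) := fun x => by ring
  rw [intervalIntegral.integral_congr fun x _ => h x]
  rw [intervalIntegral.integral_sub (Continuous.intervalIntegrable (by fun_prop) _ _)
    (Continuous.intervalIntegrable (by fun_prop) _ _), intervalIntegral.integral_const_mul,
    hcrit, hlog]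
  simp

/-- Key estimate for the multiplicity-two analysis: for `0 ≤ a < 1`, `c > 0`,
`0 ≤ b < c·√(1 − a²)`, if `y` is a positive 2π-periodic solution of the Abel
equation with `∫₀^{2π}(2(b + c·cos x)·y + 3(sin x − a)·y²) dx = 0`
(non-hyperbolicity) and `x*` is a global maximum point of `y`, then
`∫_{x*}^{x*+2π} y′(x)·exp(∫_{x*}^x (sin u − a)·y(u)² du) dx < 0`;
consequently `G''(y*) > 0`, the periodic solution has multiplicity exactly two
and is lower stable. -/
theorem abel_semistable_integral_neg
    (a b c : ℝ) (ha0 : 0 ≤ a) (ha1 : a < 1) (hc : 0 < c)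
    (hb0 : 0 ≤ b) (hb : b < c * Real.sqrt (1 - a ^ 2))
    (y : ℝ → ℝ)
    (hsol : ∀ x : ℝ, HasDerivAt y
      ((b + c * Real.cos x) * (y x) ^ 2 + (Real.sin x - a) * (y x) ^ 3) x)
    (hper : ∀ x : ℝ, y (x + 2 * Real.pi) = y x)
    (hpos : ∀ x : ℝ, 0 < y x)
    (hcrit : ∫ x in (0:ℝ)..(2 * Real.pi),
      (2 * (b + c * Real.cos x) * y x + 3 * (Real.sin x - a) * (y x) ^ 2) = 0)
    (xstar : ℝ) (hmax : ∀ x : ℝ, y x ≤ y xstar) :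
    (∫ x in xstar..(xstar + 2 * Real.pi),
      deriv y x * Real.exp (∫ u in xstar..x, (Real.sin u - a) * (y u) ^ 2)) < 0 := by

  have hyc : Continuous y := continuous_iff_continuousAt.2 fun x => (hsol x).continuousAt
  have hR : b ^ 2 + (a * c) ^ 2 < c ^ 2 := by
    have h1 : b ^ 2 < (c * √(1 - a ^ 2)) ^ 2 := pow_lt_pow_left₀ hb hb0 two_ne_zero
    rw [mul_pow, sq_sqrt (by nlinarith)] at h1
    linarith
  have hlc : Continuous fun u => (sin u - a) * (y u) ^ 2 := by fun_prop
  obtain ⟨L, hLdef⟩ : ∃ L : ℝ → ℝ, ∀ x, L x = ∫ u in xstar..x, (sin u - a) * (y u) ^ 2 :=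
    ⟨_, fun _ => rfl⟩
  have hL : ∀ x, HasDerivAt L ((sin x - a) * (y x) ^ 2) x := fun x => by
    rw [funext hLdef]
    exact (hlc.integral_hasStrictDerivAt xstar x).hasDerivAt
  have hLend : L (xstar + 2 * π) = L xstar := by
    have hp : Function.Periodic (fun u => (sin u - a) * (y u) ^ 2) (2 * π) := fun u => by
      simp only [sin_add_two_pi, hper]
    have := hp.intervalIntegral_add_eq xstar 0
    rw [zero_add, integral_abel_cubic_coeff_eq_zero hsol hper hpos hcrit] at this
    rw [hLdef, hLdef, this, intervalIntegral.integral_same]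
  obtain ⟨xm, hxm, hneg, hpos'⟩ :=
    abel_unimodal ha0 ha1 hc hb0 hb hR hsol hL hper hpos hmax
  have hfac : ∀ x, (b + c * cos x) * (y x) ^ 2 + (sin x - a) * (y x) ^ 3 =
      (y x) ^ 2 * (b + c * cos x + (sin x - a) * y x) := fun x => by ring
  simp only [← hLdef, (hsol _).deriv]
  refine integral_mul_exp_neg_of_unimodal hxm.1 hxm.2 hsol (by fun_prop) hL
    (fun x hx => ?_) (fun x hx => ?_) (hper _) hLend ?_
  · rw [hfac]; exact mul_neg_of_pos_of_neg (pow_pos (hpos x) 2) (hneg x hx)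
  · rw [hfac]; exact mul_pos (pow_pos (hpos x) 2) (hpos' x hx)
  have hslope : ∀ t ∈ Set.Ioo xstar xm, ∀ i ∈ Set.Ioo xm (xstar + 2 * π), y t = y i →
      (sin i - a) * (y i) ^ 2 / ((b + c * cos i) * (y i) ^ 2 + (sin i - a) * (y i) ^ 3) -
        (sin t - a) * (y t) ^ 2 / ((b + c * cos t) * (y t) ^ 2 + (sin t - a) * (y t) ^ 3) =
      ((b + c * cos t) * (sin i - a) - (b + c * cos i) * (sin t - a)) /
        ((b + c * cos i + (sin i - a) * y i) * (b + c * cos t + (sin t - a) * y t)) ∧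
      (b + c * cos i + (sin i - a) * y i) * (b + c * cos t + (sin t - a) * y t) < 0 := by
    intro t ht i hi hti
    have h1 := hneg t ht
    have h2 := hpos' i hi
    refine ⟨?_, mul_neg_of_pos_of_neg h2 h1⟩
    have h3 := (hpos i).ne'
    have h1' := h1.ne
    have h2' := h2.ne'
    rw [hfac, hfac]
    rw [mul_comm (sin i - a) (y i ^ 2), mul_comm (sin t - a) (y t ^ 2),
      mul_div_mul_left _ _ (pow_ne_zero 2 h3), mul_div_mul_left _ _ (pow_ne_zero 2 (hpos t).ne'),
      div_sub_div _ _ h2' h1', hti]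
    ring
  intro t ht i hi t' ht' i' hi' hti hti' htt hii hle
  obtain ⟨e1, n1⟩ := hslope t ht i hi hti
  obtain ⟨e2, n2⟩ := hslope t' ht' i' hi' hti'
  rw [e1, le_div_iff_of_neg n1, zero_mul] at hle
  rw [e2]
  exact div_pos_of_neg_of_neg (ellipse_cross_neg hc hR htt (ht.2.trans hi.1) hii
    (by linarith [hi'.2, ht'.1]) hle) n2
end

section
/- Let a ≥ 0, b > 0 and c ∈ ℝ. Then the Abel equation (E) has at most two limit cycles that are nowhere zero: there do not exist three pairwise distinct 2π-periodic solutions y₁, y₂, y₃ of (E), each satisfying yᵢ(x) ≠ 0 for all x, such that each yᵢ is isolated among 2π-periodic solutions. (Via the transformation y ↦ 1/y, this says the Josephson system x′ = y, y′ = −(sin x − a) − (b + c·cos x)·y has at most two limit cycles of the second kind.) -/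
open Real

/-- `y` is a 2π-periodic solution of the Abel equation
`y′ = (b + c·cos x)·y² + (sin x − a)·y³`. -/
def IsAbelPeriodicSolution (a b c : ℝ) (y : ℝ → ℝ) : Prop :=
  (∀ x : ℝ, HasDerivAt y
    ((b + c * Real.cos x) * (y x) ^ 2 + (Real.sin x - a) * (y x) ^ 3) x) ∧
  (∀ x : ℝ, y (x + 2 * Real.pi) = y x)

/-- `y` is isolated among 2π-periodic solutions of the Abel equation
(i.e. it is a limit cycle). -/
def IsAbelLimitCycle (a b c : ℝ) (y : ℝ → ℝ) : Prop :=
  IsAbelPeriodicSolution a b c y ∧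
  ∃ ε > 0, ∀ z : ℝ → ℝ, IsAbelPeriodicSolution a b c z → |z 0 - y 0| < ε → z = y

section Auxiliary

open Set Filter Topology

/-- A strictly increasing function on a compact interval has a continuous inverse, differentiable
in the interior. -/
theorem exists_inverse_of_deriv_pos {f f' : ℝ → ℝ} {a b : ℝ} (hab : a < b)
    (hf : ∀ x, HasDerivAt f (f' x) x) (hpos : ∀ x ∈ Ioo a b, 0 < f' x) :
    f a < f b ∧ ∃ g : ℝ → ℝ, Continuous g ∧ g (f a) = a ∧ g (f b) = b ∧
      StrictMonoOn g (Icc (f a) (f b)) ∧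
      ∀ r ∈ Ioo (f a) (f b), g r ∈ Ioo a b ∧ f (g r) = r ∧ HasDerivAt g (f' (g r))⁻¹ r := by
  have hcont : Continuous f := continuous_iff_continuousAt.2 fun x => (hf x).continuousAt
  have hmono : StrictMonoOn f (Icc a b) := by
    refine strictMonoOn_of_deriv_pos (convex_Icc a b) hcont.continuousOn fun x hx => ?_
    rw [interior_Icc] at hx
    rw [(hf x).deriv]
    exact hpos x hx
  have ha : a ∈ Icc a b := left_mem_Icc.2 hab.le
  have hb : b ∈ Icc a b := right_mem_Icc.2 hab.le
  have hfab : f a < f b := hmono ha hb hab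
  have hmaps : ∀ x : Icc a b, f x ∈ Icc (f a) (f b) := fun x =>
    ⟨hmono.monotoneOn ha x.2 x.2.1, hmono.monotoneOn x.2 hb x.2.2⟩
  let F : Icc a b → Icc (f a) (f b) := fun x => ⟨f x, hmaps x⟩
  have hF : StrictMono F := fun x y hxy => hmono x.2 y.2 hxy
  have hsurj : Function.Surjective F := fun r => by
    obtain ⟨x, hx, hxr⟩ := intermediate_value_Icc hab.le hcont.continuousOn r.2
    exact ⟨⟨x, hx⟩, Subtype.ext hxr⟩
  let e := hF.orderIsoOfSurjective F hsurj
  let g : ℝ → ℝ := fun r => (e.symm (projIcc (f a) (f b) hfab.le r) : ℝ)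
  have hgc : Continuous g :=
    continuous_subtype_val.comp (e.symm.continuous.comp continuous_projIcc)
  have hgmem : ∀ r, g r ∈ Icc a b := fun r => (e.symm _).2
  have hfg : ∀ r ∈ Icc (f a) (f b), f (g r) = r := fun r hr => by
    have h := congrArg Subtype.val (e.apply_symm_apply (projIcc (f a) (f b) hfab.le r))
    rw [projIcc_of_mem hfab.le hr] at h
    change f (e.symm (projIcc (f a) (f b) hfab.le r)) = r
    rw [projIcc_of_mem hfab.le hr]
    exact h
  have hga : g (f a) = a :=
    hmono.injOn (hgmem _) ha (hfg _ (left_mem_Icc.2 hfab.le))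
  have hgb : g (f b) = b :=
    hmono.injOn (hgmem _) hb (hfg _ (right_mem_Icc.2 hfab.le))
  have hgmono : StrictMonoOn g (Icc (f a) (f b)) := fun r hr s hs hrs => by
    rw [← hmono.lt_iff_lt (hgmem r) (hgmem s), hfg r hr, hfg s hs]
    exact hrs
  refine ⟨hfab, g, hgc, hga, hgb, hgmono, fun r hr => ?_⟩
  have hr' := Ioo_subset_Icc_self hr
  have hg : g r ∈ Ioo a b := by
    constructor
    · rw [← hga]; exact hgmono (left_mem_Icc.2 hfab.le) hr' hr.1
    · rw [← hgb]; exact hgmono hr' (right_mem_Icc.2 hfab.le) hr.2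
  refine ⟨hg, hfg r hr', (hf (g r)).of_local_left_inverse hgc.continuousAt (hpos _ hg).ne' ?_⟩
  filter_upwards [Ioo_mem_nhds hr.1 hr.2] with s hs using hfg s (Ioo_subset_Icc_self hs)

/-- The decreasing counterpart of `exists_inverse_of_deriv_pos`. -/
theorem exists_inverse_of_deriv_neg {f f' : ℝ → ℝ} {a b : ℝ} (hab : a < b)
    (hf : ∀ x, HasDerivAt f (f' x) x) (hneg : ∀ x ∈ Ioo a b, f' x < 0) :
    f b < f a ∧ ∃ g : ℝ → ℝ, Continuous g ∧ g (f b) = b ∧ g (f a) = a ∧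
      StrictAntiOn g (Icc (f b) (f a)) ∧
      ∀ r ∈ Ioo (f b) (f a), g r ∈ Ioo a b ∧ f (g r) = r ∧ HasDerivAt g (f' (g r))⁻¹ r := by
  obtain ⟨hlt, g, hg, hgb, hga, hmono, hint⟩ :=
    exists_inverse_of_deriv_pos (f := fun x => f (-x)) (f' := fun x => -f' (-x))
      (neg_lt_neg hab)
      (fun x => ((hf (-x)).comp x (hasDerivAt_neg x)).congr_deriv (by simp))
      (fun x hx => neg_pos.2 (hneg _ ⟨by linarith [hx.2], by linarith [hx.1]⟩))
  simp only [neg_neg] at hlt hgb hga hmono hint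
  refine ⟨hlt, fun r => -g r, hg.neg, by simp [hgb], by simp [hga],
    fun r hr s hs hrs => neg_lt_neg (hmono hr hs hrs), fun r hr => ?_⟩
  obtain ⟨h1, h2, h3⟩ := hint r hr
  refine ⟨⟨by linarith [h1.2], by linarith [h1.1]⟩, h2, ?_⟩
  exact h3.neg.congr_deriv (by simp [inv_neg])

/-- A solution of a scalar linear homogeneous equation that vanishes somewhere is zero. -/
theorem eq_zero_of_hasDerivAt_linear {k d : ℝ → ℝ} (hk : Continuous k)
    (hd : ∀ x, HasDerivAt d (k x * d x) x) {x₀ : ℝ} (h₀ : d x₀ = 0) (x : ℝ) : d x = 0 := by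
  have hK : ∀ x, HasDerivAt (fun u => ∫ t in x₀..u, k t) (k x) x := fun x =>
    (hk.integral_hasStrictDerivAt x₀ x).hasDerivAt
  have hE : ∀ x, HasDerivAt (fun u => d u * Real.exp (-∫ t in x₀..u, k t)) 0 x := fun x =>
    ((hd x).mul (hK x).neg.exp).congr_deriv (by simp only [Pi.neg_apply]; ring)
  have h := is_const_of_deriv_eq_zero (fun x => (hE x).differentiableAt)
    (fun x => (hE x).deriv) x x₀
  simpa [h₀, (Real.exp_pos _).ne'] using h

/-- A periodic function with nonpositive derivative has zero derivative. -/
theorem deriv_eq_zero_of_periodic_of_nonpos {f f' : ℝ → ℝ} {T : ℝ} (hT : 0 < T)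
    (hf : ∀ x, HasDerivAt f (f' x) x) (hper : Function.Periodic f T) (hle : ∀ x, f' x ≤ 0)
    (x : ℝ) : f' x = 0 := by
  have hanti : Antitone f := antitone_of_hasDerivAt_nonpos hf hle
  have hev : f =ᶠ[𝓝 x] fun _ => f (x - T / 2) := by
    filter_upwards [Ioo_mem_nhds (show x - T / 2 < x by linarith)
      (show x < x - T / 2 + T by linarith)] with s hs
    refine le_antisymm (hanti hs.1.le) ?_
    rw [← hper (x - T / 2)]
    exact hanti hs.2.le
  exact (hf x).unique ((hasDerivAt_const x _).congr_of_eventuallyEq hev)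

/-- Shooting lemma: `D` increases as long as `G > 0`, and `G` cannot return to zero while
`D > 0`. -/
theorem pos_of_shooting {D G D' G' : ℝ → ℝ} {r s : ℝ} (hrs : r < s)
    (hDc : Continuous D) (hGc : Continuous G) (hD₀ : D r = 0) (hG₀ : G r = 0)
    (hD : ∀ t ∈ Ioo r s, HasDerivAt D (D' t) t) (hG : ∀ t ∈ Ioo r s, HasDerivAt G (G' t) t)
    (hD' : ∀ t ∈ Ioo r s, 0 < G t → 0 < D' t) (hinit : ∀ᶠ t in 𝓝[>] r, 0 < G' t)
    (hG' : ∀ t ∈ Ioo r s, G t = 0 → 0 < D t → 0 < G' t) : 0 < D s := by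
  have hDpos : ∀ t ∈ Ioc r s, (∀ u ∈ Ioo r t, 0 < G u) → 0 < D t := fun t ht hGt => by
    have hm : StrictMonoOn D (Icc r t) := by
      refine strictMonoOn_of_deriv_pos (convex_Icc r t) hDc.continuousOn fun u hu => ?_
      rw [interior_Icc] at hu
      have hu' : u ∈ Ioo r s := ⟨hu.1, hu.2.trans_le ht.2⟩
      rw [(hD u hu').deriv]
      exact hD' u hu' (hGt u hu)
    rw [← hD₀]
    exact hm (left_mem_Icc.2 ht.1.le) (right_mem_Icc.2 ht.1.le) ht.1
  obtain ⟨q, hq, hqpos⟩ := (mem_nhdsGT_iff_exists_Ioo_subset' hrs).1 hinit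
  have hGnear : ∀ u ∈ Ioo r (min q s), 0 < G u := fun u hu => by
    have hm : StrictMonoOn G (Icc r (min q s)) := by
      refine strictMonoOn_of_deriv_pos (convex_Icc _ _) hGc.continuousOn fun v hv => ?_
      rw [interior_Icc] at hv
      rw [(hG v ⟨hv.1, hv.2.trans_le (min_le_right _ _)⟩).deriv]
      exact hqpos ⟨hv.1, hv.2.trans_le (min_le_left _ _)⟩
    rw [← hG₀]
    exact hm (left_mem_Icc.2 (hu.1.trans hu.2).le) (Ioo_subset_Icc_self hu) hu.1
  have hrq : r < min q s := lt_min hq hrs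
  refine hDpos s ⟨hrs, le_rfl⟩ ?_
  by_contra! hcon
  obtain ⟨v, hv, hGv⟩ := hcon
  let Z := {u | u ∈ Icc (min ((r + min q s) / 2) v) v ∧ G u ≤ 0}
  have hZc : IsCompact Z :=
    isCompact_Icc.inter_right (isClosed_le hGc continuous_const)
  have hZne : Z.Nonempty := ⟨v, ⟨min_le_right _ _, le_rfl⟩, hGv⟩
  obtain ⟨t, ⟨htI, htG⟩, htmin⟩ := hZc.exists_isLeast hZne
  have hrt : r < t := (lt_min (by linarith) hv.1).trans_le htI.1
  have htpos : ∀ u ∈ Ioo r t, 0 < G u := fun u hu => by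
    by_contra! hGu
    have hu1 : min q s ≤ u := by
      by_contra! h
      exact absurd (hGnear u ⟨hu.1, h⟩) (not_lt.2 hGu)
    exact absurd (htmin ⟨⟨(min_le_left _ _).trans (by linarith), hu.2.le.trans htI.2⟩, hGu⟩)
      (not_le.2 hu.2)
  have hts : t ∈ Ioo r s := ⟨hrt, htI.2.trans_lt hv.2⟩
  have htG0 : G t = 0 := by
    refine le_antisymm htG ?_
    refine ge_of_tendsto (hGc.continuousAt.mono_left nhdsWithin_le_nhds : Tendsto G (𝓝[<] t) _) ?_
    filter_upwards [Ioo_mem_nhdsLT hrt] with u hu using (htpos u hu).le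
  have hslope := hG' t hts htG0 (hDpos t ⟨hrt, hts.2.le⟩ htpos)
  have hlim := (hasDerivAt_iff_tendsto_slope_left_right.1 (hG t hts)).1
  refine absurd hslope (not_lt.2 (le_of_tendsto hlim ?_))
  filter_upwards [Ioo_mem_nhdsLT hrt] with u hu
  rw [slope_def_field, htG0, sub_zero]
  exact (div_neg_of_pos_of_neg (by simpa using htpos u hu) (sub_neg.2 hu.2)).le

/-- Two branches, compared through `D` and `G`, cannot both start and end together when the
slopes `βm`, `βp` cross at a nonnegative level. -/
theorem false_of_two_branches {D G D' Pm Pp βm βp : ℝ → ℝ} {r₀ r₁ s : ℝ} (hs : s ∈ Ioo r₀ r₁)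
    (hDc : Continuous D) (hGc : Continuous G)
    (hD₀ : D r₀ = 0) (hG₀ : G r₀ = 0) (hD₁ : D r₁ = 0) (hG₁ : G r₁ = 0)
    (hD : ∀ t ∈ Ioo r₀ r₁, HasDerivAt D (D' t) t)
    (hG : ∀ t ∈ Ioo r₀ r₁, HasDerivAt G (βp t * Pp t - βm t * Pm t) t)
    (hD' : ∀ t ∈ Ioo r₀ r₁, 0 < G t → 0 < D' t)
    (hPm : ∀ t ∈ Ioo r₀ r₁, 0 < Pm t) (hPp : ∀ t ∈ Ioo r₀ r₁, 0 < Pp t)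
    (hlt : ∀ t ∈ Ioo r₀ r₁, G t = 0 → 0 < D t → Pm t < Pp t)
    (hgt : ∀ t ∈ Ioo r₀ r₁, G t = 0 → D t < 0 → Pp t < Pm t)
    (hβm : StrictMonoOn βm (Ioo r₀ r₁)) (hβp : StrictAntiOn βp (Ioo r₀ r₁))
    (h₀ : ∀ᶠ t in 𝓝[>] r₀, βm t < 0 ∧ 0 < βp t) (h₁ : ∀ᶠ t in 𝓝[<] r₁, 0 < βm t ∧ βp t < 0)
    (hcross : βm s = βp s) (hnonneg : 0 ≤ βm s) : False := by
  have hpos : 0 < D s := by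
    refine pos_of_shooting hs.1 hDc hGc hD₀ hG₀
      (fun t ht => hD t ⟨ht.1, ht.2.trans hs.2⟩) (fun t ht => hG t ⟨ht.1, ht.2.trans hs.2⟩)
      (fun t ht => hD' t ⟨ht.1, ht.2.trans hs.2⟩) ?_ ?_
    · filter_upwards [h₀, Ioo_mem_nhdsGT (hs.1.trans hs.2)] with t ht htI
      nlinarith [mul_pos ht.2 (hPp t htI), mul_pos (neg_pos.2 ht.1) (hPm t htI)]
    · intro t ht hGt hDt
      have ht' : t ∈ Ioo r₀ r₁ := ⟨ht.1, ht.2.trans hs.2⟩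
      have h1 := hβm ht' hs ht.2
      have h2 := hβp ht' hs ht.2
      have h3 : 0 < βp t - βm t := by linarith
      have h4 : 0 < βp t := by linarith
      nlinarith [mul_pos h3 (hPm t ht'), mul_pos h4 (sub_pos.2 (hlt t ht' hGt hDt))]
  have hneg : 0 < -D (- -s) := by
    have hmem : ∀ t ∈ Ioo (-r₁) (-s), -t ∈ Ioo r₀ r₁ := fun t ht =>
      ⟨by linarith [ht.2, hs.1], by linarith [ht.1]⟩
    refine pos_of_shooting (D := fun t => -D (-t)) (G := fun t => G (-t))
      (D' := fun t => D' (-t)) (G' := fun t => βm (-t) * Pm (-t) - βp (-t) * Pp (-t))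
      (neg_lt_neg hs.2) (hDc.comp continuous_neg).neg (hGc.comp continuous_neg)
      (by simp [hD₁]) (by simp [hG₁])
      (fun t ht => (((hD _ (hmem t ht)).comp t (hasDerivAt_neg t)).neg).congr_deriv (by simp))
      (fun t ht => ((hG _ (hmem t ht)).comp t (hasDerivAt_neg t)).congr_deriv (by ring))
      (fun t ht => hD' _ (hmem t ht)) ?_ ?_
    · have htend : Tendsto (fun t : ℝ => -t) (𝓝[>] (-r₁)) (𝓝[<] r₁) := by
        simpa using tendsto_neg_nhdsGT (a := -r₁)
      filter_upwards [htend.eventually h₁,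
        htend.eventually (Ioo_mem_nhdsLT (hs.1.trans hs.2))] with t ht htI
      nlinarith [mul_pos ht.1 (hPm _ htI), mul_pos (neg_pos.2 ht.2) (hPp _ htI)]
    · intro t ht hGt hDt
      have ht' := hmem t ht
      have hst : s < -t := by linarith [ht.2]
      have h1 := hβm hs ht' hst
      have h2 := hβp hs ht' hst
      have h3 : 0 < βm (-t) - βp (-t) := by linarith
      have h4 : 0 < βm (-t) := by linarith
      nlinarith [mul_pos h3 (hPp _ ht'),
        mul_pos h4 (sub_pos.2 (hgt _ ht' hGt (by linarith)))]
  rw [neg_neg] at hneg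
  linarith

/-- A strictly increasing function crosses any function in opposite position at the two ends of
an interval. -/
theorem exists_crossing {f g : ℝ → ℝ} {r₀ r₁ : ℝ} (hr : r₀ < r₁)
    (hfc : ContinuousOn f (Ioo r₀ r₁)) (hgc : ContinuousOn g (Ioo r₀ r₁))
    (hf : StrictMonoOn f (Ioo r₀ r₁))
    (h₀ : ∀ᶠ t in 𝓝[>] r₀, f t < 0 ∧ 0 < g t) (h₁ : ∀ᶠ t in 𝓝[<] r₁, 0 < f t ∧ g t < 0) :
    ∃ s ∈ Ioo r₀ r₁, f s = g s := by
  obtain ⟨u, hu, huI⟩ := (h₀.and (Ioo_mem_nhdsGT hr)).exists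
  obtain ⟨v, hv, hvI⟩ := (h₁.and (Ioo_mem_nhdsLT hr)).exists
  have huv : u < v := (hf.lt_iff_lt huI hvI).1 (hu.1.trans hv.1)
  have hsub : Icc u v ⊆ Ioo r₀ r₁ := fun t ht => ⟨huI.1.trans_le ht.1, ht.2.trans_lt hvI.2⟩
  obtain ⟨s, hs, h⟩ := intermediate_value_Icc huv.le ((hfc.sub hgc).mono hsub)
    (show (0 : ℝ) ∈ Icc (f u - g u) (f v - g v) from ⟨by linarith, by linarith⟩)
  exact ⟨s, hsub hs, sub_eq_zero.1 h⟩

/-- With equal gap ratio and equal difference of squares, a larger gap forces a smaller product. -/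
theorem mul_mul_lt_of_gap_lt {x₁ x₂ x₃ y₁ y₂ y₃ r : ℝ} (hx : 0 < x₁) (hx₁₂ : x₁ < x₂)
    (hy : 0 < y₁) (hy₁₂ : y₁ < y₂) (hr : 0 < r)
    (hx₃ : x₃ - x₂ = r * (x₂ - x₁)) (hy₃ : y₃ - y₂ = r * (y₂ - y₁))
    (hM : x₂ ^ 2 - x₁ ^ 2 = y₂ ^ 2 - y₁ ^ 2) (hU : y₂ - y₁ < x₂ - x₁) :
    x₁ * x₂ * x₃ < y₁ * y₂ * y₃ := by
  obtain ⟨u, hu⟩ : ∃ u, u = x₂ - x₁ := ⟨_, rfl⟩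
  obtain ⟨s, hs⟩ : ∃ s, s = x₂ + x₁ := ⟨_, rfl⟩
  obtain ⟨v, hv⟩ : ∃ v, v = y₂ - y₁ := ⟨_, rfl⟩
  obtain ⟨t, ht⟩ : ∃ t, t = y₂ + y₁ := ⟨_, rfl⟩
  obtain rfl : x₁ = (s - u) / 2 := by linarith
  obtain rfl : x₂ = (s + u) / 2 := by linarith
  obtain rfl : y₁ = (t - v) / 2 := by linarith
  obtain rfl : y₂ = (t + v) / 2 := by linarith
  obtain rfl : x₃ = (s + u) / 2 + r * u := by linarith
  obtain rfl : y₃ = (t + v) / 2 + r * v := by linarith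
  have hM' : s * u = t * v := by linarith
  have hvpos : 0 < v := by linarith
  have hvu : v < u := by linarith
  have hupos : 0 < u := hvpos.trans hvu
  have hspos : 0 < s := by linarith
  have hst : s < t := by
    by_contra! h
    nlinarith [mul_lt_mul_of_pos_left hvu hspos, mul_le_mul_of_nonneg_right h hvpos.le]
  have h1 : s ^ 3 < t ^ 3 := by gcongr
  have h2 : v ^ 3 < u ^ 3 := by gcongr
  have hm : 0 < s * u := mul_pos hspos hupos
  have h3 : (1 + 2 * r) * s * (s * u) < (1 + 2 * r) * t * (s * u) := by gcongr
  have h4 : v * (s * u) < u * (s * u) := by gcongr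
  have h5 : (1 + 2 * r) * v ^ 3 < (1 + 2 * r) * u ^ 3 := by gcongr
  have h6 : (1 + 2 * r) * t * (s * u) = (1 + 2 * r) * t * (t * v) := by rw [hM']
  have h7 : v * (s * u) = v * (t * v) := by rw [hM']
  linarith

theorem exists_scaling {x₁ x₂ x₃ r : ℝ} (hx : 0 < x₁) (hx₁₂ : x₁ < x₂)
    (hx₃ : x₃ - x₂ = r * (x₂ - x₁)) :
    ∃ τ u, 0 < τ ∧ 0 < u ∧ x₁ = τ * u ∧ x₂ = (τ + 1) * u ∧ x₃ = (τ + 1 + r) * u := by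
  have hu : 0 < x₂ - x₁ := sub_pos.2 hx₁₂
  refine ⟨x₁ / (x₂ - x₁), x₂ - x₁, div_pos hx hu, hu, ?_, ?_, ?_⟩
  · field_simp
  · field_simp; ring
  · field_simp; linarith

theorem scaled_quotient {τ u r : ℝ} (hτ : 0 < τ) (hu : 0 < u) :
    (((τ + 1 + r) * u) ^ 2 - ((τ + 1) * u) ^ 2) / (((τ + 1) * u) ^ 2 - (τ * u) ^ 2) =
      r + r * (1 + r) / (2 * τ + 1) := by
  have h : ((τ + 1) * u) ^ 2 - (τ * u) ^ 2 = (2 * τ + 1) * u ^ 2 := by ring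
  rw [h]
  field_simp
  ring

/-- With equal gap ratio, a larger quotient of differences of squares forces a smaller relative
height. -/
theorem div_gap_lt_of_quotient_lt {x₁ x₂ x₃ y₁ y₂ y₃ r : ℝ} (hx : 0 < x₁) (hx₁₂ : x₁ < x₂)
    (hy : 0 < y₁) (hy₁₂ : y₁ < y₂) (hr : 0 < r)
    (hx₃ : x₃ - x₂ = r * (x₂ - x₁)) (hy₃ : y₃ - y₂ = r * (y₂ - y₁))
    (hS : (y₃ ^ 2 - y₂ ^ 2) / (y₂ ^ 2 - y₁ ^ 2) < (x₃ ^ 2 - x₂ ^ 2) / (x₂ ^ 2 - x₁ ^ 2)) :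
    x₃ / (x₂ - x₁) < y₃ / (y₂ - y₁) := by
  obtain ⟨τ, u, hτ, hu, rfl, rfl, rfl⟩ := exists_scaling hx hx₁₂ hx₃
  obtain ⟨σ, v, hσ, hv, rfl, rfl, rfl⟩ := exists_scaling hy hy₁₂ hy₃
  rw [scaled_quotient hτ hu, scaled_quotient hσ hv, add_lt_add_iff_left,
    div_lt_div_iff_of_pos_left (by positivity) (by positivity) (by positivity)] at hS
  have h1 : (τ + 1) * u - τ * u = u := by ring
  have h2 : (σ + 1) * v - σ * v = v := by ring
  rw [h1, h2, mul_div_cancel_right₀ _ hu.ne', mul_div_cancel_right₀ _ hv.ne']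
  linarith

/-- With equal gap ratio and equal quotient of differences of squares, the two triples are
proportional. -/
theorem mul_div_sq_lt_of_gap_lt {x₁ x₂ x₃ y₁ y₂ y₃ r : ℝ} (hx : 0 < x₁) (hx₁₂ : x₁ < x₂)
    (hy : 0 < y₁) (hy₁₂ : y₁ < y₂) (hr : 0 < r)
    (hx₃ : x₃ - x₂ = r * (x₂ - x₁)) (hy₃ : y₃ - y₂ = r * (y₂ - y₁))
    (hS : (x₃ ^ 2 - x₂ ^ 2) / (x₂ ^ 2 - x₁ ^ 2) = (y₃ ^ 2 - y₂ ^ 2) / (y₂ ^ 2 - y₁ ^ 2))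
    (hU : y₂ - y₁ < x₂ - x₁) :
    2 * (y₁ * y₂ * y₃) / (y₁ + y₂) ^ 2 < 2 * (x₁ * x₂ * x₃) / (x₁ + x₂) ^ 2 := by
  obtain ⟨τ, u, hτ, hu, rfl, rfl, rfl⟩ := exists_scaling hx hx₁₂ hx₃
  obtain ⟨σ, v, hσ, hv, rfl, rfl, rfl⟩ := exists_scaling hy hy₁₂ hy₃
  rw [scaled_quotient hτ hu, scaled_quotient hσ hv, add_right_inj,
    div_eq_div_iff (by positivity) (by positivity), mul_right_inj' (by positivity)] at hS
  obtain rfl : τ = σ := by linarith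
  have key : ∀ w : ℝ, 0 < w →
      2 * (τ * w * ((τ + 1) * w) * ((τ + 1 + r) * w)) / (τ * w + (τ + 1) * w) ^ 2 =
        2 * (τ * (τ + 1) * (τ + 1 + r)) / (2 * τ + 1) ^ 2 * w := fun w hw => by
    have h : τ * w + (τ + 1) * w = (2 * τ + 1) * w := by ring
    rw [h]
    field_simp
  rw [key u hu, key v hv]
  have huv : v < u := by linarith
  gcongr

/-- Three ordered positive solutions of `z' = -B - A / z`. -/
structure OrderedOrbits (A B z₁ z₂ z₃ : ℝ → ℝ) : Prop where
  pos : ∀ x, 0 < z₁ x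
  lt₁₂ : ∀ x, z₁ x < z₂ x
  lt₂₃ : ∀ x, z₂ x < z₃ x
  deriv₁ : ∀ x, HasDerivAt z₁ (-B x - A x / z₁ x) x
  deriv₂ : ∀ x, HasDerivAt z₂ (-B x - A x / z₂ x) x
  deriv₃ : ∀ x, HasDerivAt z₃ (-B x - A x / z₃ x) x

namespace OrderedOrbits

variable {A B z₁ z₂ z₃ : ℝ → ℝ}

theorem cont₁ (h : OrderedOrbits A B z₁ z₂ z₃) : Continuous z₁ :=
  continuous_iff_continuousAt.2 fun x => (h.deriv₁ x).continuousAt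

theorem cont₂ (h : OrderedOrbits A B z₁ z₂ z₃) : Continuous z₂ :=
  continuous_iff_continuousAt.2 fun x => (h.deriv₂ x).continuousAt

theorem cont₃ (h : OrderedOrbits A B z₁ z₂ z₃) : Continuous z₃ :=
  continuous_iff_continuousAt.2 fun x => (h.deriv₃ x).continuousAt

/-- The derivative of the gap ratio `(z₃ - z₂) / (z₂ - z₁)`. -/
theorem hasDerivAt_ratio (h : OrderedOrbits A B z₁ z₂ z₃) (x : ℝ) :
    HasDerivAt (fun x => (z₃ x - z₂ x) / (z₂ x - z₁ x))
      (-A x * ((z₃ x - z₂ x) * (z₃ x - z₁ x) / ((z₂ x - z₁ x) * (z₁ x * z₂ x * z₃ x)))) x := by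
  have h1 := h.pos x
  have h2 := h1.trans (h.lt₁₂ x)
  have h3 := h2.trans (h.lt₂₃ x)
  have hU := sub_pos.2 (h.lt₁₂ x)
  refine (((h.deriv₃ x).sub (h.deriv₂ x)).div ((h.deriv₂ x).sub (h.deriv₁ x))
    hU.ne').congr_deriv ?_
  simp only [Pi.sub_apply]
  field_simp
  ring

theorem slope_pos (h : OrderedOrbits A B z₁ z₂ z₃) (x : ℝ) :
    0 < (z₃ x - z₂ x) * (z₃ x - z₁ x) / ((z₂ x - z₁ x) * (z₁ x * z₂ x * z₃ x)) := by
  have h1 := h.pos x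
  have h2 := h1.trans (h.lt₁₂ x)
  have h3 := h2.trans (h.lt₂₃ x)
  have hU := sub_pos.2 (h.lt₁₂ x)
  have hW := sub_pos.2 (h.lt₂₃ x)
  have hUW : 0 < z₃ x - z₁ x := by linarith
  positivity

section Branch

variable {g : ℝ → ℝ} {r : ℝ}

theorem hasDerivAt_sq_sub_sq (h : OrderedOrbits A B z₁ z₂ z₃) (hA : A (g r) ≠ 0)
    (hr : (z₃ (g r) - z₂ (g r)) / (z₂ (g r) - z₁ (g r)) = r)
    (hg : HasDerivAt g (-A (g r) * ((z₃ (g r) - z₂ (g r)) * (z₃ (g r) - z₁ (g r)) /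
      ((z₂ (g r) - z₁ (g r)) * (z₁ (g r) * z₂ (g r) * z₃ (g r)))))⁻¹ r) :
    HasDerivAt (fun t => z₂ (g t) ^ 2 - z₁ (g t) ^ 2)
      (B (g r) / A (g r) * (2 / (r * (1 + r)) * (z₁ (g r) * z₂ (g r) * z₃ (g r)))) r := by
  have h1 := h.pos (g r)
  have h2 := h1.trans (h.lt₁₂ (g r))
  have h3 := h2.trans (h.lt₂₃ (g r))
  have hU := sub_pos.2 (h.lt₁₂ (g r))
  have hW := sub_pos.2 (h.lt₂₃ (g r))
  have hUW : 0 < z₃ (g r) - z₁ (g r) := by linarith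
  refine ((((h.deriv₂ (g r)).pow 2).sub ((h.deriv₁ (g r)).pow 2)).comp r hg).congr_deriv ?_
  have hr1 : r * (1 + r) = (z₃ (g r) - z₂ (g r)) * (z₃ (g r) - z₁ (g r)) /
      (z₂ (g r) - z₁ (g r)) ^ 2 := by
    conv_lhs => rw [← hr]
    field_simp
    ring
  rw [hr1]
  field_simp
  ring

theorem hasDerivAt_mul_gap (h : OrderedOrbits A B z₁ z₂ z₃) (hA : A (g r) ≠ 0)
    (hg : HasDerivAt g (-A (g r) * ((z₃ (g r) - z₂ (g r)) * (z₃ (g r) - z₁ (g r)) /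
      ((z₂ (g r) - z₁ (g r)) * (z₁ (g r) * z₂ (g r) * z₃ (g r)))))⁻¹ r) :
    HasDerivAt (fun t => (z₃ (g t) - z₂ (g t)) * (z₃ (g t) - z₁ (g t)))
      (-(z₂ (g r) ^ 2 - z₁ (g r) ^ 2)) r := by
  have h1 := h.pos (g r)
  have h2 := h1.trans (h.lt₁₂ (g r))
  have h3 := h2.trans (h.lt₂₃ (g r))
  have hU := sub_pos.2 (h.lt₁₂ (g r))
  have hW := sub_pos.2 (h.lt₂₃ (g r))
  have hUW : 0 < z₃ (g r) - z₁ (g r) := by linarith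
  refine ((((h.deriv₃ (g r)).sub (h.deriv₂ (g r))).mul
    ((h.deriv₃ (g r)).sub (h.deriv₁ (g r)))).comp r hg).congr_deriv ?_
  simp only [Pi.sub_apply]
  field_simp
  ring

theorem hasDerivAt_quotient (h : OrderedOrbits A B z₁ z₂ z₃) (hA : A (g r) ≠ 0)
    (hg : HasDerivAt g (-A (g r) * ((z₃ (g r) - z₂ (g r)) * (z₃ (g r) - z₁ (g r)) /
      ((z₂ (g r) - z₁ (g r)) * (z₁ (g r) * z₂ (g r) * z₃ (g r)))))⁻¹ r) :
    HasDerivAt (fun t => (z₃ (g t) ^ 2 - z₂ (g t) ^ 2) / (z₂ (g t) ^ 2 - z₁ (g t) ^ 2))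
      (-(B (g r) / A (g r)) *
        (2 * (z₁ (g r) * z₂ (g r) * z₃ (g r)) / (z₁ (g r) + z₂ (g r)) ^ 2)) r := by
  have h1 := h.pos (g r)
  have h2 := h1.trans (h.lt₁₂ (g r))
  have h3 := h2.trans (h.lt₂₃ (g r))
  have hU := sub_pos.2 (h.lt₁₂ (g r))
  have hW := sub_pos.2 (h.lt₂₃ (g r))
  have hUW : 0 < z₃ (g r) - z₁ (g r) := by linarith
  have hM : z₂ (g r) ^ 2 - z₁ (g r) ^ 2 = (z₂ (g r) - z₁ (g r)) * (z₁ (g r) + z₂ (g r)) := by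
    ring
  refine (((((h.deriv₃ (g r)).pow 2).sub ((h.deriv₂ (g r)).pow 2)).div
    (((h.deriv₂ (g r)).pow 2).sub ((h.deriv₁ (g r)).pow 2))
    (by simp only [Pi.sub_apply, Pi.pow_apply]; rw [hM]; positivity)).comp r hg).congr_deriv ?_
  simp only [Pi.sub_apply, Pi.pow_apply]
  rw [hM]
  field_simp
  ring

theorem hasDerivAt_log_gap (h : OrderedOrbits A B z₁ z₂ z₃) (hA : A (g r) ≠ 0)
    (hr : (z₃ (g r) - z₂ (g r)) / (z₂ (g r) - z₁ (g r)) = r)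
    (hg : HasDerivAt g (-A (g r) * ((z₃ (g r) - z₂ (g r)) * (z₃ (g r) - z₁ (g r)) /
      ((z₂ (g r) - z₁ (g r)) * (z₁ (g r) * z₂ (g r) * z₃ (g r)))))⁻¹ r) :
    HasDerivAt (fun t => Real.log (z₂ (g t) - z₁ (g t)))
      (-(1 / (r * (1 + r)) * (z₃ (g r) / (z₂ (g r) - z₁ (g r))))) r := by
  have h1 := h.pos (g r)
  have h2 := h1.trans (h.lt₁₂ (g r))
  have h3 := h2.trans (h.lt₂₃ (g r))
  have hU := sub_pos.2 (h.lt₁₂ (g r))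
  have hW := sub_pos.2 (h.lt₂₃ (g r))
  have hUW : 0 < z₃ (g r) - z₁ (g r) := by linarith
  refine ((((h.deriv₂ (g r)).sub (h.deriv₁ (g r))).log hU.ne').comp r hg).congr_deriv ?_
  have hr1 : r * (1 + r) = (z₃ (g r) - z₂ (g r)) * (z₃ (g r) - z₁ (g r)) /
      (z₂ (g r) - z₁ (g r)) ^ 2 := by
    conv_lhs => rw [← hr]
    field_simp
    ring
  rw [hr1]
  simp only [Pi.sub_apply]
  field_simp
  ring

end Branch

/-- Three ordered positive periodic solutions cannot exist when `A` is positive and then negative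
along a period and `B / A` decreases on each of the two pieces. -/
theorem false_of_strictAntiOn (h : OrderedOrbits A B z₁ z₂ z₃) {p q p' : ℝ} (hpq : p < q)
    (hqp' : q < p') (hA : Continuous A) (hB : Continuous B) (hApos : ∀ x ∈ Ioo p q, 0 < A x)
    (hAneg : ∀ x ∈ Ioo q p', A x < 0) (hanti : StrictAntiOn (fun x => B x / A x) (Ioo p q))
    (hanti' : StrictAntiOn (fun x => B x / A x) (Ioo q p')) (hBp : 0 < B p) (hBq : B q < 0)
    (hBp' : 0 < B p') (e₁ : z₁ p' = z₁ p) (e₂ : z₂ p' = z₂ p) (e₃ : z₃ p' = z₃ p) : False := by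
  obtain ⟨R, hR⟩ : ∃ R : ℝ → ℝ, R = fun x => (z₃ x - z₂ x) / (z₂ x - z₁ x) := ⟨_, rfl⟩
  have hRd := h.hasDerivAt_ratio
  rw [← hR] at hRd
  obtain ⟨hlt, xm, hxm, hxm₀, hxm₁, hxmmono, hxmI⟩ := exists_inverse_of_deriv_neg hpq hRd
    fun x hx => by nlinarith [mul_pos (hApos x hx) (h.slope_pos x)]
  obtain ⟨-, xp, hxp, hxp₀, hxp₁, hxpmono, hxpI⟩ := exists_inverse_of_deriv_pos hqp' hRd
    fun x hx => mul_pos (neg_pos.2 (hAneg x hx)) (h.slope_pos x)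
  have hRp : R p' = R p := by simp only [hR, e₁, e₂, e₃]
  rw [hRp] at hxp₁ hxpmono hxpI
  have hR₀ : 0 < R q := by
    rw [hR]; exact div_pos (sub_pos.2 (h.lt₂₃ q)) (sub_pos.2 (h.lt₁₂ q))
  generalize R q = r₀ at *
  generalize R p = r₁ at *
  have hβm : StrictMonoOn (fun t => B (xm t) / A (xm t)) (Ioo r₀ r₁) := fun s hs t ht hst =>
    hanti (hxmI t ht).1 (hxmI s hs).1
      (hxmmono (Ioo_subset_Icc_self hs) (Ioo_subset_Icc_self ht) hst)
  have hβp : StrictAntiOn (fun t => B (xp t) / A (xp t)) (Ioo r₀ r₁) := fun s hs t ht hst =>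
    hanti' (hxpI s hs).1 (hxpI t ht).1
      (hxpmono (Ioo_subset_Icc_self hs) (Ioo_subset_Icc_self ht) hst)
  have hAm : ∀ t ∈ Ioo r₀ r₁, 0 < A (xm t) := fun t ht => hApos _ (hxmI t ht).1
  have hAp : ∀ t ∈ Ioo r₀ r₁, A (xp t) < 0 := fun t ht => hAneg _ (hxpI t ht).1
  have h₀ : ∀ᶠ t in 𝓝[>] r₀, B (xm t) / A (xm t) < 0 ∧ 0 < B (xp t) / A (xp t) := by
    have hm : ∀ᶠ t in 𝓝 r₀, B (xm t) < 0 :=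
      (hB.comp hxm).continuousAt.eventually_lt continuousAt_const (by simpa [hxm₀] using hBq)
    have hp : ∀ᶠ t in 𝓝 r₀, B (xp t) < 0 :=
      (hB.comp hxp).continuousAt.eventually_lt continuousAt_const (by simpa [hxp₀] using hBq)
    filter_upwards [nhdsWithin_le_nhds hm, nhdsWithin_le_nhds hp, Ioo_mem_nhdsGT hlt]
      with t h1 h2 ht
    exact ⟨div_neg_of_neg_of_pos h1 (hAm t ht), div_pos_of_neg_of_neg h2 (hAp t ht)⟩
  have h₁ : ∀ᶠ t in 𝓝[<] r₁, 0 < B (xm t) / A (xm t) ∧ B (xp t) / A (xp t) < 0 := by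
    have hm : ∀ᶠ t in 𝓝 r₁, 0 < B (xm t) :=
      continuousAt_const.eventually_lt (hB.comp hxm).continuousAt (by simpa [hxm₁] using hBp)
    have hp : ∀ᶠ t in 𝓝 r₁, 0 < B (xp t) :=
      continuousAt_const.eventually_lt (hB.comp hxp).continuousAt (by simpa [hxp₁] using hBp')
    filter_upwards [nhdsWithin_le_nhds hm, nhdsWithin_le_nhds hp, Ioo_mem_nhdsLT hlt]
      with t h1 h2 ht
    exact ⟨div_pos h1 (hAm t ht), div_neg_of_pos_of_neg h2 (hAp t ht)⟩
  obtain ⟨s, hs, hcross⟩ := exists_crossing hlt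
    ((hB.comp hxm).continuousOn.div (hA.comp hxm).continuousOn fun t ht => (hAm t ht).ne')
    ((hB.comp hxp).continuousOn.div (hA.comp hxp).continuousOn fun t ht => (hAp t ht).ne)
    hβm h₀ h₁
  have hz₁ := h.cont₁
  have hz₂ := h.cont₂
  have hz₃ := h.cont₃
  have hpos₂ : ∀ x, 0 < z₂ x := fun x => (h.pos x).trans (h.lt₁₂ x)
  have hpos₃ : ∀ x, 0 < z₃ x := fun x => (hpos₂ x).trans (h.lt₂₃ x)
  have hgap : ∀ x, 0 < z₂ x - z₁ x := fun x => sub_pos.2 (h.lt₁₂ x)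
  have hsum : ∀ x, 0 < z₁ x + z₂ x := fun x => add_pos (h.pos x) (hpos₂ x)
  have hprod : ∀ x, 0 < z₁ x * z₂ x * z₃ x := fun x =>
    mul_pos (mul_pos (h.pos x) (hpos₂ x)) (hpos₃ x)
  have hsq : ∀ x, 0 < z₂ x ^ 2 - z₁ x ^ 2 := fun x => by
    nlinarith [mul_pos (hgap x) (hsum x)]
  have hrpos : ∀ t ∈ Ioo r₀ r₁, 0 < t := fun t ht => hR₀.trans ht.1
  have hratio : ∀ t x, R x = t → z₃ x - z₂ x = t * (z₂ x - z₁ x) := fun t x hx => by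
    rw [← hx, hR]
    exact (div_mul_cancel₀ _ (hgap x).ne').symm
  have hm := fun t ht => hratio t _ (hxmI t ht).2.1
  have hp := fun t ht => hratio t _ (hxpI t ht).2.1
  have hRm : ∀ t ∈ Ioo r₀ r₁, R (xm t) = t := fun t ht => (hxmI t ht).2.1
  have hRp' : ∀ t ∈ Ioo r₀ r₁, R (xp t) = t := fun t ht => (hxpI t ht).2.1
  rw [hR] at hRm hRp'
  have hheight : ∀ t ∈ Ioo r₀ r₁, ∀ x y, R x = t → R y = t →
      (z₃ x - z₂ x) * (z₃ x - z₁ x) < (z₃ y - z₂ y) * (z₃ y - z₁ y) →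
      z₂ x - z₁ x < z₂ y - z₁ y := fun t ht x y hx hy hlt => by
    have hx' := hratio t x hx
    have hy' := hratio t y hy
    have ex : z₃ x - z₁ x = (1 + t) * (z₂ x - z₁ x) := by linarith
    have ey : z₃ y - z₁ y = (1 + t) * (z₂ y - z₁ y) := by linarith
    rw [hx', hy', ex, ey] at hlt
    have ht0 := hrpos t ht
    by_contra! hle
    have : t * (z₂ y - z₁ y) * ((1 + t) * (z₂ y - z₁ y)) ≤
        t * (z₂ x - z₁ x) * ((1 + t) * (z₂ x - z₁ x)) := by
      have := hgap x
      have := hgap y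
      gcongr
    linarith
  rcases le_total 0 (B (xm s) / A (xm s)) with hnonneg | hnonpos
  · refine false_of_two_branches hs
      (D := fun t => (z₃ (xm t) - z₂ (xm t)) * (z₃ (xm t) - z₁ (xm t)) -
        (z₃ (xp t) - z₂ (xp t)) * (z₃ (xp t) - z₁ (xp t)))
      (G := fun t => (z₂ (xp t) ^ 2 - z₁ (xp t) ^ 2) - (z₂ (xm t) ^ 2 - z₁ (xm t) ^ 2))
      (Pm := fun t => 2 / (t * (1 + t)) * (z₁ (xm t) * z₂ (xm t) * z₃ (xm t)))
      (Pp := fun t => 2 / (t * (1 + t)) * (z₁ (xp t) * z₂ (xp t) * z₃ (xp t)))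
      (by fun_prop) (by fun_prop) (by simp [hxm₀, hxp₀]) (by simp [hxm₀, hxp₀])
      (by simp [hxm₁, hxp₁, e₁, e₂, e₃]) (by simp [hxm₁, hxp₁, e₁, e₂])
      (fun t ht => (h.hasDerivAt_mul_gap (hAm t ht).ne' (hxmI t ht).2.2).sub
        (h.hasDerivAt_mul_gap (hAp t ht).ne (hxpI t ht).2.2))
      (fun t ht => (h.hasDerivAt_sq_sub_sq (hAp t ht).ne (hRp' t ht) (hxpI t ht).2.2).sub
        (h.hasDerivAt_sq_sub_sq (hAm t ht).ne' (hRm t ht) (hxmI t ht).2.2))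
      (fun t ht hG => by linarith) (fun t ht => ?_) (fun t ht => ?_) (fun t ht hG hD => ?_)
      (fun t ht hG hD => ?_) hβm hβp h₀ h₁ hcross hnonneg
    · have := hrpos t ht
      have := hprod (xm t)
      positivity
    · have := hrpos t ht
      have := hprod (xp t)
      positivity
    · have := hrpos t ht
      have hU := hheight t ht _ _ (hxpI t ht).2.1 (hxmI t ht).2.1 (by linarith)
      exact mul_lt_mul_of_pos_left (mul_mul_lt_of_gap_lt (h.pos _) (h.lt₁₂ _) (h.pos _)
        (h.lt₁₂ _) this (hm t ht) (hp t ht) (by linarith) hU) (by positivity)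
    · have := hrpos t ht
      have hU := hheight t ht _ _ (hxmI t ht).2.1 (hxpI t ht).2.1 (by linarith)
      exact mul_lt_mul_of_pos_left (mul_mul_lt_of_gap_lt (h.pos _) (h.lt₁₂ _) (h.pos _)
        (h.lt₁₂ _) this (hp t ht) (hm t ht) (by linarith) hU) (by positivity)
  · refine false_of_two_branches hs
      (D := fun t => Real.log (z₂ (xm t) - z₁ (xm t)) - Real.log (z₂ (xp t) - z₁ (xp t)))
      (G := fun t => (z₃ (xm t) ^ 2 - z₂ (xm t) ^ 2) / (z₂ (xm t) ^ 2 - z₁ (xm t) ^ 2) -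
        (z₃ (xp t) ^ 2 - z₂ (xp t) ^ 2) / (z₂ (xp t) ^ 2 - z₁ (xp t) ^ 2))
      (Pm := fun t => 2 * (z₁ (xp t) * z₂ (xp t) * z₃ (xp t)) / (z₁ (xp t) + z₂ (xp t)) ^ 2)
      (Pp := fun t => 2 * (z₁ (xm t) * z₂ (xm t) * z₃ (xm t)) / (z₁ (xm t) + z₂ (xm t)) ^ 2)
      (βm := fun t => -(B (xp t) / A (xp t))) (βp := fun t => -(B (xm t) / A (xm t)))
      ?_ ?_ (by simp [hxm₀, hxp₀]) (by simp [hxm₀, hxp₀])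
      (by simp [hxm₁, hxp₁, e₁, e₂]) (by simp [hxm₁, hxp₁, e₁, e₂, e₃])
      (fun t ht => (h.hasDerivAt_log_gap (hAm t ht).ne' (hRm t ht) (hxmI t ht).2.2).sub
        (h.hasDerivAt_log_gap (hAp t ht).ne (hRp' t ht) (hxpI t ht).2.2))
      (fun t ht => (h.hasDerivAt_quotient (hAm t ht).ne' (hxmI t ht).2.2).sub
        (h.hasDerivAt_quotient (hAp t ht).ne (hxpI t ht).2.2))
      (fun t ht hG => ?_) (fun t ht => ?_) (fun t ht => ?_) (fun t ht hG hD => ?_)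
      (fun t ht hG hD => ?_) (fun x hx y hy hxy => neg_lt_neg (hβp hx hy hxy))
      (fun x hx y hy hxy => neg_lt_neg (hβm hx hy hxy))
      (h₀.mono fun t ht => ⟨neg_neg_of_pos ht.2, neg_pos.2 ht.1⟩)
      (h₁.mono fun t ht => ⟨neg_pos.2 ht.2, neg_neg_of_pos ht.1⟩)
      (by simpa using hcross.symm) (neg_nonneg.2 (hcross.symm.le.trans hnonpos))
    · exact (Continuous.log (by fun_prop) fun t => (hgap _).ne').sub
        (Continuous.log (by fun_prop) fun t => (hgap _).ne')
    · exact (Continuous.div (by fun_prop) (by fun_prop) fun t => (hsq _).ne').sub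
        (Continuous.div (by fun_prop) (by fun_prop) fun t => (hsq _).ne')
    · have ht0 := hrpos t ht
      have hlt := div_gap_lt_of_quotient_lt (h.pos _) (h.lt₁₂ _) (h.pos _)
        (h.lt₁₂ _) ht0 (hm t ht) (hp t ht) (sub_pos.1 hG)
      have := mul_lt_mul_of_pos_left hlt (show 0 < 1 / (t * (1 + t)) by positivity)
      linarith
    · have := hprod (xp t)
      have := hsum (xp t)
      positivity
    · have := hprod (xm t)
      have := hsum (xm t)
      positivity
    · exact mul_div_sq_lt_of_gap_lt (h.pos _) (h.lt₁₂ _) (h.pos _) (h.lt₁₂ _) (hrpos t ht)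
        (hm t ht) (hp t ht) (sub_eq_zero.1 hG)
        ((Real.log_lt_log_iff (hgap _) (hgap _)).1 (sub_pos.1 hD))
    · exact mul_div_sq_lt_of_gap_lt (h.pos _) (h.lt₁₂ _) (h.pos _) (h.lt₁₂ _) (hrpos t ht)
        (hp t ht) (hm t ht) (sub_eq_zero.1 hG).symm
        ((Real.log_lt_log_iff (hgap _) (hgap _)).1 (sub_neg.1 hD))

end OrderedOrbits

/-- A nowhere zero `T`-periodic solution of `z' = -B - A / z`. -/
structure IsPeriodicOrbit (A B : ℝ → ℝ) (T : ℝ) (z : ℝ → ℝ) : Prop where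
  ne_zero : ∀ x, z x ≠ 0
  deriv : ∀ x, HasDerivAt z (-B x - A x / z x) x
  periodic : Function.Periodic z T

namespace IsPeriodicOrbit

variable {A B z w : ℝ → ℝ} {T : ℝ}

theorem continuous (hz : IsPeriodicOrbit A B T z) : Continuous z :=
  continuous_iff_continuousAt.2 fun x => (hz.deriv x).continuousAt

theorem pos_or_neg (hz : IsPeriodicOrbit A B T z) : (∀ x, 0 < z x) ∨ ∀ x, z x < 0 := by
  by_contra! hcon
  obtain ⟨⟨x, hx⟩, y, hy⟩ := hcon
  obtain ⟨t, ht⟩ := mem_range_of_exists_le_of_exists_ge hz.continuous ⟨x, hx⟩ ⟨y, hy⟩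
  exact hz.ne_zero t ht

theorem lt_or_gt (hz : IsPeriodicOrbit A B T z) (hw : IsPeriodicOrbit A B T w)
    (hA : Continuous A) (hne : z ≠ w) : (∀ x, z x < w x) ∨ ∀ x, w x < z x := by
  have hk : Continuous fun x => A x / (z x * w x) :=
    hA.div (hz.continuous.mul hw.continuous) fun x => mul_ne_zero (hz.ne_zero x) (hw.ne_zero x)
  have hd : ∀ x, HasDerivAt (fun x => w x - z x) (A x / (z x * w x) * (w x - z x)) x :=
    fun x => ((hw.deriv x).sub (hz.deriv x)).congr_deriv (by
      have := hz.ne_zero x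
      have := hw.ne_zero x
      field_simp
      ring)
  by_contra! hcon
  obtain ⟨⟨x, hx⟩, y, hy⟩ := hcon
  obtain ⟨t, ht⟩ := mem_range_of_exists_le_of_exists_ge (hw.continuous.sub hz.continuous)
    ⟨x, sub_nonpos.2 hx⟩ ⟨y, sub_nonneg.2 hy⟩
  exact hne (funext fun u => (sub_eq_zero.1 (eq_zero_of_hasDerivAt_linear hk hd ht u)).symm)

theorem false_of_nonneg (hz : IsPeriodicOrbit A B T z) (hw : IsPeriodicOrbit A B T w)
    (hT : 0 < T) (hlt : ∀ x, z x < w x) (hB : ∀ x, 0 ≤ B x) {x₀ : ℝ} (hx₀ : 0 < B x₀) :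
    False := by
  have hd : ∀ x, HasDerivAt (fun x => w x ^ 2 - z x ^ 2) (-(2 * B x * (w x - z x))) x :=
    fun x => (((hw.deriv x).pow 2).sub ((hz.deriv x).pow 2)).congr_deriv (by
      have := hz.ne_zero x
      have := hw.ne_zero x
      field_simp
      ring)
  have h := deriv_eq_zero_of_periodic_of_nonpos hT hd
    (fun x => by simp only [hz.periodic x, hw.periodic x])
    (fun x => by nlinarith [mul_nonneg (hB x) (sub_pos.2 (hlt x)).le]) x₀
  nlinarith [mul_pos hx₀ (sub_pos.2 (hlt x₀))]

theorem false_of_nonpos (hz : IsPeriodicOrbit A B T z) (hw : IsPeriodicOrbit A B T w)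
    (hT : 0 < T) (hpos : ∀ x, 0 < z x) (hlt : ∀ x, z x < w x) (hA : ∀ x, A x ≤ 0) {x₀ : ℝ}
    (hx₀ : A x₀ < 0) : False := by
  have hwpos : ∀ x, 0 < w x := fun x => (hpos x).trans (hlt x)
  have hd : ∀ x, HasDerivAt (fun x => w x - z x) (A x * ((w x - z x) / (z x * w x))) x :=
    fun x => ((hw.deriv x).sub (hz.deriv x)).congr_deriv (by
      have := hz.ne_zero x
      have := hw.ne_zero x
      field_simp
      ring)
  have hq : ∀ x, 0 < (w x - z x) / (z x * w x) := fun x =>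
    div_pos (sub_pos.2 (hlt x)) (mul_pos (hpos x) (hwpos x))
  have h := deriv_eq_zero_of_periodic_of_nonpos hT hd
    (fun x => by simp only [hz.periodic x, hw.periodic x])
    (fun x => mul_nonpos_of_nonpos_of_nonneg (hA x) (hq x).le) x₀
  exact (mul_neg_of_neg_of_pos hx₀ (hq x₀)).ne h

theorem false_of_combination_nonneg (hz : IsPeriodicOrbit A B T z) (hw : IsPeriodicOrbit A B T w)
    (hT : 0 < T) (hpos : ∀ x, 0 < z x) (hlt : ∀ x, z x < w x) {l : ℝ} (hl : 0 < l)
    (hN : ∀ x, 0 ≤ B x - l * A x) {x₀ : ℝ} (hx₀ : 0 < B x₀ - l * A x₀) : False := by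
  have hwpos : ∀ x, 0 < w x := fun x => (hpos x).trans (hlt x)
  have hz1 : ∀ x, 0 < 1 + l * z x := fun x => by have := hpos x; positivity
  have hw1 : ∀ x, 0 < 1 + l * w x := fun x => by have := hwpos x; positivity
  have hd : ∀ x, HasDerivAt
      (fun x => (l * w x - Real.log (1 + l * w x)) - (l * z x - Real.log (1 + l * z x)))
      (-((B x - l * A x) * (l ^ 2 * (w x - z x) / ((1 + l * w x) * (1 + l * z x))))) x :=
    fun x => ((((hw.deriv x).const_mul l).sub
      ((((hw.deriv x).const_mul l).const_add 1).log (hw1 x).ne')).sub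
      (((hz.deriv x).const_mul l).sub
      ((((hz.deriv x).const_mul l).const_add 1).log (hz1 x).ne'))).congr_deriv (by
      have := hz.ne_zero x
      have := hw.ne_zero x
      have := hz1 x
      have := hw1 x
      field_simp
      ring)
  have hq : ∀ x, 0 < l ^ 2 * (w x - z x) / ((1 + l * w x) * (1 + l * z x)) := fun x =>
    div_pos (mul_pos (by positivity) (sub_pos.2 (hlt x))) (mul_pos (hw1 x) (hz1 x))
  have h := deriv_eq_zero_of_periodic_of_nonpos hT hd
    (fun x => by simp only [hz.periodic x, hw.periodic x])
    (fun x => neg_nonpos.2 (mul_nonneg (hN x) (hq x).le)) x₀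
  exact (neg_neg_of_pos (mul_pos hx₀ (hq x₀))).ne h

end IsPeriodicOrbit

section Josephson

variable {a b c : ℝ} {z w z₁ z₂ z₃ : ℝ → ℝ}

/-- A nowhere zero periodic orbit of the Josephson system. -/
abbrev IsJosephsonOrbit (a b c : ℝ) (z : ℝ → ℝ) : Prop :=
  IsPeriodicOrbit (fun x => Real.sin x - a) (fun x => b + c * Real.cos x) (2 * Real.pi) z

theorem IsJosephsonOrbit.hasDerivAt_add (hz : IsJosephsonOrbit a b c z) (x : ℝ) :
    HasDerivAt (fun x => z x + c * (Real.sin x - a)) (-b - (Real.sin x - a) / z x) x :=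
  ((hz.deriv x).add (((Real.hasDerivAt_sin x).sub_const a).const_mul c)).congr_deriv (by ring)

theorem IsJosephsonOrbit.false_of_nonpos_of_lt (hz : IsJosephsonOrbit a b c z)
    (hw : IsJosephsonOrbit a b c w) (hb : 0 < b) (hc : c ≤ 0) (hsign : ∀ x, 0 < z x * w x)
    (hlt : ∀ x, z x < w x) : False := by
  have hd : ∀ x, HasDerivAt
      (fun x => (w x + c * (Real.sin x - a)) ^ 2 - (z x + c * (Real.sin x - a)) ^ 2)
      (-(2 * (w x - z x) * (b + -c * ((Real.sin x - a) ^ 2 / (z x * w x))))) x :=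
    fun x => (((hw.hasDerivAt_add x).pow 2).sub ((hz.hasDerivAt_add x).pow 2)).congr_deriv (by
      have := hz.ne_zero x
      have := hw.ne_zero x
      field_simp
      ring)
  have hneg : ∀ x, -(2 * (w x - z x) * (b + -c * ((Real.sin x - a) ^ 2 / (z x * w x)))) < 0 :=
    fun x => by
      have h1 := sub_pos.2 (hlt x)
      have h2 := hsign x
      have h3 : 0 ≤ -c := neg_nonneg.2 hc
      exact neg_neg_of_pos (by positivity)
  exact (hneg 0).ne (deriv_eq_zero_of_periodic_of_nonpos Real.two_pi_pos hd
    (fun x => by simp only [hz.periodic x, hw.periodic x, Real.sin_add_two_pi])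
    (fun x => (hneg x).le) 0)

theorem IsJosephsonOrbit.eq_of_nonpos (hz : IsJosephsonOrbit a b c z)
    (hw : IsJosephsonOrbit a b c w) (hb : 0 < b) (hc : c ≤ 0) (hsign : ∀ x, 0 < z x * w x) :
    z = w := by
  by_contra hne
  rcases hz.lt_or_gt hw (by fun_prop) hne with hlt | hlt
  · exact hz.false_of_nonpos_of_lt hw hb hc hsign hlt
  · exact hw.false_of_nonpos_of_lt hz hb hc (fun x => by rw [mul_comm]; exact hsign x) hlt

theorem IsJosephsonOrbit.pos_of_nonneg (hz : IsJosephsonOrbit a b c z) (ha : 0 ≤ a) (hb : 0 < b)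
    (hc : 0 ≤ c) (x : ℝ) : 0 < z x := by
  rcases hz.pos_or_neg with hpos | hneg
  · exact hpos x
  exfalso
  have hd : ∀ x, HasDerivAt
      (fun x => 2 * (1 + b * c) * Real.cos x - (z x + c * (Real.sin x - a)) ^ 2)
      (-(2 * (1 + b * c) * a + 2 * b * -z x + 2 * c * ((Real.sin x - a) ^ 2 / -z x))) x :=
    fun x => (((Real.hasDerivAt_cos x).const_mul (2 * (1 + b * c))).sub
      ((hz.hasDerivAt_add x).pow 2)).congr_deriv (by
      have := hz.ne_zero x
      field_simp
      ring)
  have hlt : ∀ x, -(2 * (1 + b * c) * a + 2 * b * -z x +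
      2 * c * ((Real.sin x - a) ^ 2 / -z x)) < 0 := fun x => by
    have h1 : 0 < -z x := neg_pos.2 (hneg x)
    exact neg_neg_of_pos (by positivity)
  exact (hlt 0).ne (deriv_eq_zero_of_periodic_of_nonpos Real.two_pi_pos hd
    (fun x => by simp only [hz.periodic x, Real.sin_add_two_pi, Real.cos_add_two_pi])
    (fun x => (hlt x).le) 0)

theorem cos_sub_sin_sq_le (u v x : ℝ) :
    (u * Real.cos x - v * Real.sin x) ^ 2 ≤ u ^ 2 + v ^ 2 := by
  have := Real.sin_sq_add_cos_sq x
  nlinarith [sq_nonneg (u * Real.sin x + v * Real.cos x)]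

theorem strictAntiOn_div {s : Set ℝ} (hs : Convex ℝ s) (hso : IsOpen s) (hc : 0 < c)
    (hbc : b ^ 2 < c ^ 2 * (1 - a ^ 2)) (hne : ∀ x ∈ s, Real.sin x - a ≠ 0) :
    StrictAntiOn (fun x => (b + c * Real.cos x) / (Real.sin x - a)) s := by
  have hd : ∀ x ∈ s, HasDerivAt (fun x => (b + c * Real.cos x) / (Real.sin x - a))
      (-(c + (b * Real.cos x - a * c * Real.sin x)) / (Real.sin x - a) ^ 2) x := fun x hx =>
    ((((Real.hasDerivAt_cos x).const_mul c).const_add b).div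
      ((Real.hasDerivAt_sin x).sub_const a) (hne x hx)).congr_deriv (by
      congr 1
      linear_combination (-c) * Real.sin_sq_add_cos_sq x)
  refine strictAntiOn_of_deriv_neg hs
    (fun x hx => (hd x hx).continuousAt.continuousWithinAt) fun x hx => ?_
  rw [hso.interior_eq] at hx
  rw [(hd x hx).deriv]
  have hsq := cos_sub_sin_sq_le b (a * c) x
  have habs := abs_lt_of_sq_lt_sq (show (b * Real.cos x - a * c * Real.sin x) ^ 2 < c ^ 2 by
    nlinarith) hc.le
  have hne' := hne x hx
  exact div_neg_of_neg_of_pos (by linarith [(abs_lt.1 habs).1]) (by positivity)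

theorem false_of_large_c (hz₁ : IsJosephsonOrbit a b c z₁) (hz₂ : IsJosephsonOrbit a b c z₂)
    (hz₃ : IsJosephsonOrbit a b c z₃) (ha : 0 ≤ a) (ha1 : a < 1) (hb : 0 < b) (hc : 0 < c)
    (hbc : b ^ 2 < c ^ 2 * (1 - a ^ 2)) (hpos : ∀ x, 0 < z₁ x) (h₁₂ : ∀ x, z₁ x < z₂ x)
    (h₂₃ : ∀ x, z₂ x < z₃ x) : False := by
  have hα₀ : 0 ≤ Real.arcsin a := Real.arcsin_nonneg.2 ha
  have hα₁ : Real.arcsin a < Real.pi / 2 := Real.arcsin_lt_pi_div_two.2 ha1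
  have hsin : Real.sin (Real.arcsin a) = a := Real.sin_arcsin (by linarith) ha1.le
  have hcos : 0 < Real.cos (Real.arcsin a) := Real.cos_pos_of_mem_Ioo ⟨by linarith, hα₁⟩
  have hsc := Real.sin_sq_add_cos_sq (Real.arcsin a)
  rw [hsin] at hsc
  generalize Real.arcsin a = α at *
  have hApos : ∀ x ∈ Ioo α (Real.pi - α), 0 < Real.sin x - a := fun x hx => by
    rw [← hsin, Real.sin_sub_sin]
    have h1 : 0 < Real.sin ((x - α) / 2) :=
      Real.sin_pos_of_pos_of_lt_pi (by linarith [hx.1]) (by linarith [hx.2])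
    have h2 : 0 < Real.cos ((x + α) / 2) :=
      Real.cos_pos_of_mem_Ioo ⟨by linarith [hx.1], by linarith [hx.2]⟩
    positivity
  have hAneg : ∀ x ∈ Ioo (Real.pi - α) (α + 2 * Real.pi), Real.sin x - a < 0 := fun x hx => by
    rw [← hsin, Real.sin_sub_sin]
    have h1 : 0 < Real.sin ((x - α) / 2) :=
      Real.sin_pos_of_pos_of_lt_pi (by linarith [hx.1]) (by linarith [hx.2])
    have h2 : Real.cos ((x + α) / 2) < 0 :=
      Real.cos_neg_of_pi_div_two_lt_of_lt (by linarith [hx.1]) (by linarith [hx.2])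
    exact mul_neg_of_pos_of_neg (by positivity) h2
  have hO : OrderedOrbits (fun x => Real.sin x - a) (fun x => b + c * Real.cos x) z₁ z₂ z₃ :=
    ⟨hpos, h₁₂, h₂₃, hz₁.deriv, hz₂.deriv, hz₃.deriv⟩
  have hBq : b + c * Real.cos (Real.pi - α) < 0 := by
    rw [Real.cos_pi_sub]
    have : b < c * Real.cos α := lt_of_pow_lt_pow_left₀ 2 (by positivity) (by nlinarith)
    linarith
  exact hO.false_of_strictAntiOn (by linarith) (by linarith) (by fun_prop) (by fun_prop)
    hApos hAneg
    (strictAntiOn_div (convex_Ioo _ _) isOpen_Ioo hc hbc fun x hx => (hApos x hx).ne')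
    (strictAntiOn_div (convex_Ioo _ _) isOpen_Ioo hc hbc fun x hx => (hAneg x hx).ne)
    (by positivity) hBq (by rw [Real.cos_add_two_pi]; positivity)
    (hz₁.periodic α) (hz₂.periodic α) (hz₃.periodic α)

theorem false_of_three_pos (hz₁ : IsJosephsonOrbit a b c z₁) (hz₂ : IsJosephsonOrbit a b c z₂)
    (hz₃ : IsJosephsonOrbit a b c z₃) (ha : 0 ≤ a) (hb : 0 < b) (hc : 0 < c)
    (hpos : ∀ x, 0 < z₁ x) (h₁₂ : ∀ x, z₁ x < z₂ x) (h₂₃ : ∀ x, z₂ x < z₃ x) : False := by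
  rcases le_or_gt 1 a with ha1 | ha1
  · exact hz₁.false_of_nonpos hz₂ Real.two_pi_pos hpos h₁₂
      (fun x => by linarith [Real.sin_le_one x]) (x₀ := 0) (by simp; linarith)
  rcases lt_or_ge (b ^ 2) (c ^ 2 * (1 - a ^ 2)) with hbc | hbc
  · exact false_of_large_c hz₁ hz₂ hz₃ ha ha1 hb hc hbc hpos h₁₂ h₂₃
  rcases ha.eq_or_lt with rfl | ha0
  · have hcb : c ≤ b := le_of_sq_le_sq (by linarith) hb.le
    exact hz₁.false_of_nonneg hz₂ Real.two_pi_pos h₁₂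
      (fun x => by nlinarith [Real.neg_one_le_cos x]) (x₀ := 0) (by simp; linarith)
  · have hD : 0 < 1 - a ^ 2 := by nlinarith
    have hl : 0 < a * b / (1 - a ^ 2) := by positivity
    refine hz₁.false_of_combination_nonneg hz₂ Real.two_pi_pos hpos h₁₂ hl (fun x => ?_) (x₀ := 0)
      (by simp only [Real.sin_zero, Real.cos_zero]; nlinarith [mul_pos hl ha0])
    have hsq := cos_sub_sin_sq_le c (a * b / (1 - a ^ 2)) x
    have hle : c ^ 2 + (a * b / (1 - a ^ 2)) ^ 2 ≤ (b / (1 - a ^ 2)) ^ 2 := by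
      have h1 : c ^ 2 ≤ b ^ 2 / (1 - a ^ 2) := (le_div_iff₀ hD).2 hbc
      have h2 : b ^ 2 / (1 - a ^ 2) + (a * b / (1 - a ^ 2)) ^ 2 = (b / (1 - a ^ 2)) ^ 2 := by
        field_simp
        ring
      linarith
    have habs := abs_le_of_sq_le_sq (hsq.trans hle) (by positivity)
    have heq : b + a * b / (1 - a ^ 2) * a = b / (1 - a ^ 2) := by
      field_simp
      ring
    linarith [(abs_le.1 habs).1]

theorem false_of_three_orbits (hz₁ : IsJosephsonOrbit a b c z₁)
    (hz₂ : IsJosephsonOrbit a b c z₂) (hz₃ : IsJosephsonOrbit a b c z₃) (ha : 0 ≤ a)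
    (hb : 0 < b) (h₁₂ : z₁ ≠ z₂) (h₁₃ : z₁ ≠ z₃) (h₂₃ : z₂ ≠ z₃) : False := by
  rcases le_or_gt c 0 with hc | hc
  · have hpp : ∀ {u v : ℝ → ℝ}, IsJosephsonOrbit a b c u → IsJosephsonOrbit a b c v →
        (∀ x, 0 < u x) → (∀ x, 0 < v x) → u = v := fun hu hv hu' hv' =>
      hu.eq_of_nonpos hv hb hc fun x => mul_pos (hu' x) (hv' x)
    have hnn : ∀ {u v : ℝ → ℝ}, IsJosephsonOrbit a b c u → IsJosephsonOrbit a b c v →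
        (∀ x, u x < 0) → (∀ x, v x < 0) → u = v := fun hu hv hu' hv' =>
      hu.eq_of_nonpos hv hb hc fun x => mul_pos_of_neg_of_neg (hu' x) (hv' x)
    rcases hz₁.pos_or_neg with s₁ | s₁ <;> rcases hz₂.pos_or_neg with s₂ | s₂
    · exact h₁₂ (hpp hz₁ hz₂ s₁ s₂)
    · rcases hz₃.pos_or_neg with s₃ | s₃
      · exact h₁₃ (hpp hz₁ hz₃ s₁ s₃)
      · exact h₂₃ (hnn hz₂ hz₃ s₂ s₃)
    · rcases hz₃.pos_or_neg with s₃ | s₃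
      · exact h₂₃ (hpp hz₂ hz₃ s₂ s₃)
      · exact h₁₃ (hnn hz₁ hz₃ s₁ s₃)
    · exact h₁₂ (hnn hz₁ hz₂ s₁ s₂)
  · have p₁ := hz₁.pos_of_nonneg ha hb hc.le
    have p₂ := hz₂.pos_of_nonneg ha hb hc.le
    have p₃ := hz₃.pos_of_nonneg ha hb hc.le
    rcases hz₁.lt_or_gt hz₂ (by fun_prop) h₁₂ with l | l <;>
      rcases hz₁.lt_or_gt hz₃ (by fun_prop) h₁₃ with m | m <;>
      rcases hz₂.lt_or_gt hz₃ (by fun_prop) h₂₃ with n | n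
    · exact false_of_three_pos hz₁ hz₂ hz₃ ha hb hc p₁ l n
    · exact false_of_three_pos hz₁ hz₃ hz₂ ha hb hc p₁ m n
    · exact false_of_three_pos hz₁ hz₂ hz₃ ha hb hc p₁ l n
    · exact false_of_three_pos hz₃ hz₁ hz₂ ha hb hc p₃ m l
    · exact false_of_three_pos hz₂ hz₁ hz₃ ha hb hc p₂ l m
    · exact false_of_three_pos hz₂ hz₁ hz₃ ha hb hc p₂ l m
    · exact false_of_three_pos hz₂ hz₃ hz₁ ha hb hc p₂ n m
    · exact false_of_three_pos hz₃ hz₂ hz₁ ha hb hc p₃ n l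

theorem IsAbelPeriodicSolution.isJosephsonOrbit_inv {y : ℝ → ℝ}
    (hy : IsAbelPeriodicSolution a b c y) (hne : ∀ x, y x ≠ 0) :
    IsJosephsonOrbit a b c y⁻¹ where
  ne_zero x := inv_ne_zero (hne x)
  deriv x := ((hy.1 x).inv (hne x)).congr_deriv (by
    have := hne x
    simp only [Pi.inv_apply]
    field_simp
    ring)
  periodic x := by simp only [Pi.inv_apply, hy.2 x]

end Josephson

end Auxiliary

/-- The Josephson equation has at most two limit cycles of the second kind:
for `a ≥ 0`, `b > 0`, the Abel equation has at most two nowhere-vanishing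
limit cycles. -/
theorem abel_at_most_two_nowhere_zero_limit_cycles
    (a b c : ℝ) (ha : 0 ≤ a) (hb : 0 < b) :
    ¬ ∃ y₁ y₂ y₃ : ℝ → ℝ,
      y₁ ≠ y₂ ∧ y₁ ≠ y₃ ∧ y₂ ≠ y₃ ∧
      IsAbelLimitCycle a b c y₁ ∧ (∀ x : ℝ, y₁ x ≠ 0) ∧
      IsAbelLimitCycle a b c y₂ ∧ (∀ x : ℝ, y₂ x ≠ 0) ∧
      IsAbelLimitCycle a b c y₃ ∧ (∀ x : ℝ, y₃ x ≠ 0) := by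
  rintro ⟨y₁, y₂, y₃, h₁₂, h₁₃, h₂₃, hy₁, n₁, hy₂, n₂, hy₃, n₃⟩
  exact false_of_three_orbits (hy₁.1.isJosephsonOrbit_inv n₁) (hy₂.1.isJosephsonOrbit_inv n₂)
    (hy₃.1.isJosephsonOrbit_inv n₃) ha hb (inv_injective.ne h₁₂) (inv_injective.ne h₁₃)
    (inv_injective.ne h₂₃)
end

section
/- There exist real parameters a, b, c with 0 < a < 1, c > 0 and 0 < b < c·√(1 − a²) such that the Abel equation (E) has two distinct 2π-periodic solutions y₁, y₂ with yᵢ(x) > 0 for all x, each of which is isolated among 2π-periodic solutions. Hence the upper bound of two limit cycles of the second kind for the Josephson equation is sharp. -/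
open Real

open Set Filter Topology

/-- The right-hand side of the Abel equation. -/
noncomputable def abelField (a b c x y : ℝ) : ℝ :=
  (b + c * Real.cos x) * y ^ 2 + (Real.sin x - a) * y ^ 3

lemma continuous_abelField (a b c : ℝ) : Continuous fun p : ℝ × ℝ => abelField a b c p.1 p.2 := by
  unfold abelField
  fun_prop

lemma lipschitzOnWith_abelField (a b c R : ℝ) :
    ∃ K, ∀ x, LipschitzOnWith K (abelField a b c x) (Icc (-R) R) := by
  refine ⟨Real.toNNReal ((|b| + |c|) * (2 * R) + (1 + |a|) * (3 * R ^ 2)), fun x => ?_⟩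
  refine LipschitzOnWith.of_dist_le_mul fun y hy z hz => ?_
  have hy' : |y| ≤ R := abs_le.2 hy
  have hz' : |z| ≤ R := abs_le.2 hz
  have hR : 0 ≤ R := (abs_nonneg y).trans hy'
  rw [Real.coe_toNNReal _ (by positivity), Real.dist_eq, Real.dist_eq]
  have hb : |b + c * Real.cos x| ≤ |b| + |c| := by
    refine (abs_add_le _ _).trans ?_
    rw [abs_mul]
    have := Real.abs_cos_le_one x
    nlinarith [abs_nonneg c]
  have ha : |Real.sin x - a| ≤ 1 + |a| :=
    (abs_sub _ _).trans (by linarith [Real.abs_sin_le_one x])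
  have h₁ : |y + z| ≤ 2 * R := (abs_add_le _ _).trans (by linarith)
  have h₂ : |y ^ 2 + y * z + z ^ 2| ≤ 3 * R ^ 2 := by
    rw [abs_le]
    obtain ⟨h1, h2⟩ := hy
    obtain ⟨h3, h4⟩ := hz
    constructor <;> nlinarith [sq_nonneg (y + z), sq_nonneg (y - z)]
  have heq : abelField a b c x y - abelField a b c x z =
      ((b + c * Real.cos x) * (y + z) + (Real.sin x - a) * (y ^ 2 + y * z + z ^ 2)) * (y - z) := by
    unfold abelField
    ring
  rw [heq, abs_mul]
  gcongr
  refine (abs_add_le _ _).trans ?_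
  rw [abs_mul, abs_mul]
  gcongr

lemma abelField_eqOn_Icc {a b c T : ℝ} {y z : ℝ → ℝ}
    (hy : ∀ t ∈ Icc 0 T, HasDerivWithinAt y (abelField a b c t (y t)) (Icc 0 T) t)
    (hz : ∀ t ∈ Icc 0 T, HasDerivWithinAt z (abelField a b c t (z t)) (Icc 0 T) t)
    (h0 : y 0 = z 0) : EqOn y z (Icc 0 T) := by
  have hyc : ContinuousOn y (Icc 0 T) := fun t ht => (hy t ht).continuousWithinAt
  have hzc : ContinuousOn z (Icc 0 T) := fun t ht => (hz t ht).continuousWithinAt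
  obtain ⟨R₁, hR₁⟩ := isCompact_Icc.exists_bound_of_continuousOn hyc
  obtain ⟨R₂, hR₂⟩ := isCompact_Icc.exists_bound_of_continuousOn hzc
  obtain ⟨K, hK⟩ := lipschitzOnWith_abelField a b c (max R₁ R₂)
  have hder : ∀ {w : ℝ → ℝ},
      (∀ t ∈ Icc 0 T, HasDerivWithinAt w (abelField a b c t (w t)) (Icc 0 T) t) →
      ∀ t ∈ Ico 0 T, HasDerivWithinAt w (abelField a b c t (w t)) (Ici t) t := by
    intro w hw t ht
    exact (hw t ⟨ht.1, ht.2.le⟩).mono_of_mem_nhdsWithin (Icc_mem_nhdsGE_of_mem ht)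
  refine ODE_solution_unique_of_mem_Icc_right (v := abelField a b c)
    (s := fun _ => Icc (-(max R₁ R₂)) (max R₁ R₂)) (fun t _ => hK t)
    hyc (hder hy) (fun t ht => abs_le.1 ((hR₁ t ⟨ht.1, ht.2.le⟩).trans (le_max_left _ _)))
    hzc (hder hz) (fun t ht => abs_le.1 ((hR₂ t ⟨ht.1, ht.2.le⟩).trans (le_max_right _ _))) h0

lemma exists_periodic_extension {v : ℝ → ℝ → ℝ} {T : ℝ} (hT : 0 < T)
    (hv : Continuous fun p : ℝ × ℝ => v p.1 p.2) (hvT : ∀ t x, v (t + T) x = v t x) {y : ℝ → ℝ}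
    (hy : ∀ t ∈ Icc 0 T, HasDerivWithinAt y (v t (y t)) (Icc 0 T) t) (hyT : y T = y 0) :
    ∃ z : ℝ → ℝ, (∀ t, HasDerivAt z (v t (z t)) t) ∧ (∀ t, z (t + T) = z t) ∧
      EqOn z y (Icc 0 T) := by
  have : Fact (0 < T) := ⟨hT⟩
  have hyc : ContinuousOn y (Icc 0 T) := fun t ht => (hy t ht).continuousWithinAt
  set w : ℝ → ℝ := fun t => AddCircle.liftIco T 0 y (t : AddCircle T) with hw
  have hwc : Continuous w :=
    (AddCircle.liftIco_zero_continuous hyT.symm hyc).comp (AddCircle.continuous_mk' T)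
  have hwT : ∀ t, w (t + T) = w t := fun t => by simp [hw]
  have hwy : EqOn w y (Icc 0 T) := by
    intro t ht
    rcases eq_or_lt_of_le ht.2 with h | h
    · subst h
      have := hwT 0
      rw [zero_add] at this
      rw [this, hyT]
      exact AddCircle.liftIco_zero_coe_apply ⟨le_rfl, hT⟩
    · exact AddCircle.liftIco_zero_coe_apply ⟨ht.1, h⟩
  have hgc : Continuous fun t => v t (w t) := hv.comp (continuous_id.prodMk hwc)
  set z : ℝ → ℝ := fun t => y 0 + ∫ s in 0..t, v s (w s) with hz
  have hzd : ∀ t, HasDerivAt z (v t (w t)) t := fun t =>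
    (intervalIntegral.integral_hasDerivAt_right (hgc.intervalIntegrable _ _)
      (hgc.stronglyMeasurableAtFilter _ _) hgc.continuousAt).const_add _
  have hzy : EqOn z y (Icc 0 T) := by
    intro t ht
    have : ∫ s in 0..t, v s (w s) = y t - y 0 := by
      refine intervalIntegral.integral_eq_sub_of_hasDeriv_right_of_le ht.1
        (hyc.mono (Icc_subset_Icc_right ht.2)) (fun s hs => ?_) (hgc.intervalIntegrable _ _)
      have hs' : s ∈ Icc 0 T := ⟨hs.1.le, hs.2.le.trans ht.2⟩
      rw [hwy hs']
      exact ((hy s hs').hasDerivAt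
        (Icc_mem_nhds hs.1 (hs.2.trans_le ht.2))).hasDerivWithinAt
    simp [hz, this]
  have hper : Function.Periodic (fun t => v t (w t)) T := fun t => by
    simp only [hwT, hvT]
  have hzT : Function.Periodic z T := fun t => by
    have h1 : ∫ s in 0..T, v s (w s) = 0 := by
      have := hzy (right_mem_Icc.2 hT.le)
      simp only [hz, hyT] at this
      linarith
    have h2 := hper.intervalIntegral_add_eq t 0
    rw [zero_add, h1] at h2
    have h3 := intervalIntegral.integral_add_adjacent_intervals
      (hgc.intervalIntegrable (μ := MeasureTheory.volume) 0 t)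
      (hgc.intervalIntegrable t (t + T))
    simp only [hz, ← h3, h2, add_zero]
  have hzw : z = w := by
    funext t
    have e1 : z t = z (toIcoMod hT 0 t) := by
      rw [toIcoMod, hzT.sub_zsmul_eq]
    have e2 : w t = w (toIcoMod hT 0 t) := by
      rw [toIcoMod, Function.Periodic.sub_zsmul_eq hwT]
    have hm : toIcoMod hT 0 t ∈ Icc 0 T := by
      have := toIcoMod_mem_Ico hT 0 t
      rw [zero_add] at this
      exact Ico_subset_Icc_self this
    rw [e1, e2, hzy hm, hwy hm]
  refine ⟨z, fun t => ?_, hzT, hzy⟩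
  have := hzd t
  rwa [← hzw] at this

lemma Function.Periodic.eq_of_eqOn_Icc {β : Type*} {f g : ℝ → β} {T : ℝ} (hT : 0 < T)
    (hf : Function.Periodic f T) (hg : Function.Periodic g T) (h : EqOn f g (Icc 0 T)) :
    f = g := by
  funext t
  have hm : toIcoMod hT 0 t ∈ Icc 0 T := by
    have := toIcoMod_mem_Ico hT 0 t
    rw [zero_add] at this
    exact Ico_subset_Icc_self this
  have := h hm
  rwa [toIcoMod, hf.sub_zsmul_eq, hg.sub_zsmul_eq] at this

lemma IsAbelPeriodicSolution.integral_eq_zero {a b c : ℝ} {y z : ℝ → ℝ}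
    (hy : IsAbelPeriodicSolution a b c y) (hz : IsAbelPeriodicSolution a b c z)
    (hy0 : ∀ x, 0 < y x) (hz0 : ∀ x, 0 < z x) (hne : y 0 ≠ z 0) :
    ∫ t in 0..2 * Real.pi, (a - Real.sin t) * (y t * z t) = 0 := by
  have hyc : Continuous y := continuous_iff_continuousAt.2 fun t => (hy.1 t).continuousAt
  have hzc : Continuous z := continuous_iff_continuousAt.2 fun t => (hz.1 t).continuousAt
  set g : ℝ → ℝ := fun t => (a - Real.sin t) * (y t * z t) with hg
  have hgc : Continuous g := by fun_prop
  set E : ℝ → ℝ := fun t => ∫ s in 0..t, g s with hE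
  have hEd : ∀ t, HasDerivAt E (g t) t := fun t =>
    intervalIntegral.integral_hasDerivAt_right (hgc.intervalIntegrable _ _)
      (hgc.stronglyMeasurableAtFilter _ _) hgc.continuousAt
  set D : ℝ → ℝ := fun t => ((y t)⁻¹ - (z t)⁻¹) * Real.exp (E t) with hD
  have hDd : ∀ t, HasDerivAt D 0 t := fun t => by
    have h := (((hy.1 t).inv (hy0 t).ne').sub ((hz.1 t).inv (hz0 t).ne')).mul (hEd t).exp
    refine h.congr_deriv ?_
    have h1 := (hy0 t).ne'
    have h2 := (hz0 t).ne'
    simp only [hg, Pi.sub_apply, Pi.inv_apply]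
    field_simp
    ring
  have hconst : D (2 * Real.pi) = D 0 :=
    is_const_of_deriv_eq_zero (fun t => (hDd t).differentiableAt) (fun t => (hDd t).deriv) _ _
  have hy2 : y (2 * Real.pi) = y 0 := by simpa using hy.2 0
  have hz2 : z (2 * Real.pi) = z 0 := by simpa using hz.2 0
  have hE0 : E 0 = 0 := by simp [hE]
  simp only [hD, hy2, hz2, hE0, Real.exp_zero] at hconst
  have hne' : (y 0)⁻¹ - (z 0)⁻¹ ≠ 0 := sub_ne_zero.2 fun h => hne (inv_injective h)
  have := mul_left_cancel₀ hne' hconst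
  exact Real.exp_eq_one_iff _ |>.1 this

lemma hasDerivWithinAt_abelField_of_averaged {a b c t : ℝ} {u : ℝ → ℝ} {s : Set ℝ} (hc : 0 < c)
    (hu : HasDerivWithinAt u
      ((c ^ 2)⁻¹ * ((a - Real.sin t) / (u t - Real.sin t) - b)) s t)
    (hpos : 0 < u t - Real.sin t) :
    HasDerivWithinAt (fun x => (c * (u x - Real.sin x))⁻¹)
      (abelField a (b / c) c t (c * (u t - Real.sin t))⁻¹) s t := by
  have h := ((hu.sub (Real.hasDerivAt_sin t).hasDerivWithinAt).const_mul c).inv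
    (mul_pos hc hpos).ne'
  refine h.congr_deriv ?_
  have := hpos.ne'
  have := hc.ne'
  simp only [abelField, Pi.sub_apply]
  generalize u t - Real.sin t = w at *
  field_simp
  ring

lemma exists_flow_of_bounded {f : ℝ → ℝ → ℝ} {K M : NNReal} {T x₀ r : ℝ} (hT : 0 ≤ T)
    (hr : 0 ≤ r) (hl : ∀ t, LipschitzWith K (f t)) (hc : ∀ x, Continuous (f · x))
    (hM : ∀ t x, ‖f t x‖ ≤ M) :
    ∃ α : ℝ → ℝ → ℝ, (∀ x ∈ Metric.closedBall x₀ r, α x 0 = x ∧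
      (∀ t ∈ Icc 0 T, HasDerivWithinAt (α x) (f t (α x t)) (Icc 0 T) t) ∧
      ∀ t ∈ Icc 0 T, |α x t - x| ≤ M * T) ∧
      ContinuousOn (α · T) (Metric.closedBall x₀ r) := by
  lift r to NNReal using hr
  lift T to NNReal using hT
  have hT : (0 : ℝ) ≤ T := T.2
  have hpl : IsPicardLindelof f (⟨0, left_mem_Icc.2 hT⟩ : Icc (0 : ℝ) T) x₀ (r + M * T) r M K :=
    { lipschitzOnWith := fun t _ => (hl t).lipschitzOnWith
      continuousOn := fun x _ => (hc x).continuousOn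
      norm_le := fun t _ x _ => hM t x
      mul_max_le := by
        simp }
  obtain ⟨α, hα, L, hL⟩ :=
    hpl.exists_forall_mem_closedBall_eq_hasDerivWithinAt_lipschitzOnWith
  refine ⟨α, fun x hx => ⟨(hα x hx).1, (hα x hx).2, fun t ht => ?_⟩,
    (hL T (right_mem_Icc.2 hT)).continuousOn⟩
  have h := (convex_Icc (0 : ℝ) T).norm_image_sub_le_of_norm_hasDerivWithin_le
    (hα x hx).2 (fun s _ => hM s _) (left_mem_Icc.2 hT) ht
  rw [(hα x hx).1, Real.norm_eq_abs, Real.norm_eq_abs, sub_zero, abs_of_nonneg ht.1] at h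
  exact h.trans (mul_le_mul_of_nonneg_left ht.2 M.2)

lemma abs_sub_sin_le (a t : ℝ) : |a - Real.sin t| ≤ |a| + 1 :=
  (abs_sub _ _).trans (by linarith [Real.abs_sin_le_one t])

lemma sub_sin_ge {k ρ u : ℝ} (hu : |u - k| ≤ ρ) (t : ℝ) : k - 1 - ρ ≤ u - Real.sin t := by
  linarith [(abs_le.1 hu).1, Real.sin_le_one t]

lemma abs_div_mul_le {a m t u v : ℝ} (hm : 0 < m) (hu : m ≤ u - Real.sin t)
    (hv : m ≤ v - Real.sin t) :
    |(a - Real.sin t) / ((u - Real.sin t) * (v - Real.sin t))| ≤ (|a| + 1) / m ^ 2 := by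
  rw [abs_div, abs_of_pos (mul_pos (hm.trans_le hu) (hm.trans_le hv)), sq]
  have := abs_sub_sin_le a t
  have := hm.le.trans hu
  gcongr

lemma exists_averaged_flow {a b k ρ δ : ℝ} (hρ : 0 < ρ) (hρk : ρ < k - 1) (hδ : 0 < δ)
    (hsmall : δ * ((|a| + 1) / (k - 1 - ρ) + |b|) * (2 * Real.pi) ≤ ρ / 2) :
    ∃ α : ℝ → ℝ → ℝ, (∀ x ∈ Metric.closedBall k (ρ / 2), α x 0 = x ∧
      (∀ t ∈ Icc 0 (2 * Real.pi), HasDerivWithinAt (α x)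
        (δ * ((a - Real.sin t) / (α x t - Real.sin t) - b)) (Icc 0 (2 * Real.pi)) t) ∧
      ∀ t ∈ Icc 0 (2 * Real.pi), |α x t - x| ≤
        δ * ((|a| + 1) / (k - 1 - ρ) + |b|) * (2 * Real.pi)) ∧
      ContinuousOn (α · (2 * Real.pi)) (Metric.closedBall k (ρ / 2)) := by
  set m := k - 1 - ρ with hm
  have hm0 : 0 < m := by linarith
  set p : ℝ → ℝ := fun x => max (k - ρ) (min (k + ρ) x) with hp
  have hpl : LipschitzWith 1 p := (LipschitzWith.id.const_min _).const_max _
  have hpk : ∀ x, |p x - k| ≤ ρ := fun x => by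
    rw [abs_le]
    constructor
    · linarith [le_max_left (k - ρ) (min (k + ρ) x)]
    · have : p x ≤ k + ρ := max_le (by linarith) (min_le_left _ _)
      linarith
  have hpm : ∀ t x, m ≤ p x - Real.sin t := fun t x => sub_sin_ge (hpk x) t
  have hpid : ∀ x, |x - k| ≤ ρ → p x = x := fun x hx => by
    have := abs_le.1 hx
    simp only [hp]
    rw [min_eq_right (by linarith), max_eq_right (by linarith)]
  obtain ⟨α, hα, hαc⟩ := exists_flow_of_bounded (T := 2 * Real.pi) (x₀ := k) (r := ρ / 2)
    (f := fun t x => δ * ((a - Real.sin t) / (p x - Real.sin t) - b))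
    (K := Real.toNNReal (δ * ((|a| + 1) / m ^ 2)))
    (M := Real.toNNReal (δ * ((|a| + 1) / m + |b|)))
    (by positivity) (by positivity)
    (fun t => by
      refine LipschitzWith.of_dist_le_mul fun x y => ?_
      rw [Real.coe_toNNReal _ (by positivity), Real.dist_eq, Real.dist_eq]
      have hx := hpm t x
      have hy := hpm t y
      have heq : δ * ((a - Real.sin t) / (p x - Real.sin t) - b) -
          δ * ((a - Real.sin t) / (p y - Real.sin t) - b) =
          δ * ((a - Real.sin t) / ((p x - Real.sin t) * (p y - Real.sin t))) * (p y - p x) := by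
        have h1 : p x - Real.sin t ≠ 0 := (hm0.trans_le hx).ne'
        have h2 : p y - Real.sin t ≠ 0 := (hm0.trans_le hy).ne'
        field_simp
        ring
      have hpp : |p y - p x| ≤ |x - y| := by
        have := hpl.dist_le_mul y x
        rwa [NNReal.coe_one, one_mul, Real.dist_eq, Real.dist_eq, abs_sub_comm y x] at this
      rw [heq, abs_mul, abs_mul, abs_of_pos hδ]
      have := abs_div_mul_le (a := a) hm0 hx hy
      gcongr)
    (fun x => by
      have : ∀ t, p x - Real.sin t ≠ 0 := fun t => (hm0.trans_le (hpm t x)).ne'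
      fun_prop (disch := assumption))
    (fun t x => by
      rw [Real.coe_toNNReal _ (by positivity), Real.norm_eq_abs, abs_mul, abs_of_pos hδ]
      have hx := hpm t x
      have := abs_sub_sin_le a t
      refine mul_le_mul_of_nonneg_left ((abs_sub _ _).trans ?_) hδ.le
      rw [abs_div, abs_of_pos (hm0.trans_le hx)]
      gcongr)
  rw [Real.coe_toNNReal _ (by positivity)] at hα
  refine ⟨α, fun x hx => ⟨(hα x hx).1, fun t ht => ?_, (hα x hx).2.2⟩, hαc⟩
  have h := (hα x hx).2.1 t ht
  rwa [hpid] at h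
  rw [Metric.mem_closedBall, Real.dist_eq] at hx
  have h1 := ((hα x hx).2.2 t ht).trans hsmall
  calc |α x t - k| = |(α x t - x) + (x - k)| := by ring_nf
    _ ≤ |α x t - x| + |x - k| := abs_add_le _ _
    _ ≤ ρ := by linarith

lemma exists_radius_integral_lower_bound {a k η Q : ℝ} (hk : 1 < k) (hη : 0 < η)
    (hQ : ∫ t in 0..2 * Real.pi, (a - Real.sin t) / (k - Real.sin t) ^ 2 = Q) (hQ0 : Q ≠ 0) :
    ∃ ρ, 0 < ρ ∧ ρ ≤ η ∧ ρ < k - 1 ∧ ∀ u v : ℝ → ℝ,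
      ContinuousOn u (Icc 0 (2 * Real.pi)) → ContinuousOn v (Icc 0 (2 * Real.pi)) →
      (∀ t ∈ Icc 0 (2 * Real.pi), |u t - k| ≤ ρ) → (∀ t ∈ Icc 0 (2 * Real.pi), |v t - k| ≤ ρ) →
      Q ^ 2 / 2 ≤ Q * ∫ t in 0..2 * Real.pi,
        (a - Real.sin t) / ((u t - Real.sin t) * (v t - Real.sin t)) := by
  set m := (k - 1) / 2 with hm
  have hm0 : 0 < m := by linarith
  set C := (|a| + 1) * (2 / m ^ 3) with hC
  have hC0 : 0 < C := by positivity
  have hQa : 0 < |Q| := abs_pos.2 hQ0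
  refine ⟨min η (min m (|Q| / (4 * Real.pi * C))), by positivity, min_le_left _ _,
    ((min_le_right _ _).trans (min_le_left _ _)).trans_lt (by linarith), ?_⟩
  set ρ := min η (min m (|Q| / (4 * Real.pi * C))) with hρ
  have hρ0 : 0 < ρ := by positivity
  have hρm : ρ ≤ m := (min_le_right _ _).trans (min_le_left _ _)
  have hρC : C * ρ * (2 * Real.pi) ≤ |Q| / 2 := by
    have : ρ ≤ |Q| / (4 * Real.pi * C) := (min_le_right _ _).trans (min_le_right _ _)
    rw [le_div_iff₀ (by positivity)] at this
    linarith
  intro u v huc hvc hu hv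
  have hpos : ∀ {x : ℝ}, |x - k| ≤ ρ → ∀ t, m ≤ x - Real.sin t := fun hx t => by
    linarith [sub_sin_ge hx t]
  have hkm : ∀ t, m ≤ k - Real.sin t := hpos (by simpa using hρ0.le)
  have hinv : ∀ {x : ℝ}, |x - k| ≤ ρ → ∀ t,
      |(x - Real.sin t)⁻¹ - (k - Real.sin t)⁻¹| ≤ ρ / m ^ 2 := fun {x} hx t => by
    have h1 := hm0.trans_le (hpos hx t)
    have h2 := hm0.trans_le (hkm t)
    rw [inv_sub_inv h1.ne' h2.ne', abs_div, abs_of_pos (mul_pos h1 h2), sq]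
    have h3 : |k - Real.sin t - (x - Real.sin t)| ≤ ρ := by
      rw [abs_sub_comm] at hx
      convert hx using 2
      ring
    have := hpos hx t
    have := hkm t
    gcongr
  have hpt : ∀ t ∈ Icc 0 (2 * Real.pi),
      |(a - Real.sin t) / ((u t - Real.sin t) * (v t - Real.sin t)) -
        (a - Real.sin t) / (k - Real.sin t) ^ 2| ≤ C * ρ := by
    intro t ht
    have hu1 := hpos (hu t ht) t
    have hv1 := hpos (hv t ht) t
    have hk1 := hkm t
    have heq : (a - Real.sin t) / ((u t - Real.sin t) * (v t - Real.sin t)) -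
        (a - Real.sin t) / (k - Real.sin t) ^ 2 = (a - Real.sin t) *
        (((u t - Real.sin t)⁻¹ - (k - Real.sin t)⁻¹) * (v t - Real.sin t)⁻¹ +
        (k - Real.sin t)⁻¹ * ((v t - Real.sin t)⁻¹ - (k - Real.sin t)⁻¹)) := by
      rw [div_eq_mul_inv, div_eq_mul_inv, mul_inv, sq, mul_inv]
      ring
    have hb : ∀ {x : ℝ}, m ≤ x → |x⁻¹| ≤ m⁻¹ := fun hx => by
      rw [abs_of_pos (inv_pos.2 (hm0.trans_le hx))]
      gcongr
    rw [heq, abs_mul, hC, mul_assoc]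
    have h0 := abs_sub_sin_le a t
    have h1 := hinv (hu t ht) t
    have h2 := hinv (hv t ht) t
    have h3 := hb hv1
    have h4 := hb hk1
    gcongr
    calc _ ≤ _ := abs_add_le _ _
      _ ≤ ρ / m ^ 2 * m⁻¹ + m⁻¹ * (ρ / m ^ 2) := by
        rw [abs_mul, abs_mul]
        gcongr
      _ = 2 / m ^ 3 * ρ := by
        field_simp
        ring
  set q : ℝ → ℝ := fun t => (a - Real.sin t) / ((u t - Real.sin t) * (v t - Real.sin t)) with hq
  have hπ : (0 : ℝ) ≤ 2 * Real.pi := by positivity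
  have hqi : IntervalIntegrable q MeasureTheory.volume 0 (2 * Real.pi) := by
    refine ContinuousOn.intervalIntegrable_of_Icc hπ (ContinuousOn.div (by fun_prop)
      (by fun_prop) fun t ht => ?_)
    exact (mul_pos (hm0.trans_le (hpos (hu t ht) t)) (hm0.trans_le (hpos (hv t ht) t))).ne'
  have hki : IntervalIntegrable (fun t => (a - Real.sin t) / (k - Real.sin t) ^ 2)
      MeasureTheory.volume 0 (2 * Real.pi) := by
    refine Continuous.intervalIntegrable (Continuous.div (by fun_prop) (by fun_prop) fun t => ?_)
      _ _
    exact (pow_pos (hm0.trans_le (hkm t)) 2).ne'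
  have hdiff : |(∫ t in 0..2 * Real.pi, q t) - Q| ≤ |Q| / 2 := by
    rw [← hQ, ← intervalIntegral.integral_sub hqi hki]
    refine (intervalIntegral.norm_integral_le_of_norm_le_const (C := C * ρ)
      (f := fun t => q t - (a - Real.sin t) / (k - Real.sin t) ^ 2) fun t ht => ?_).trans ?_
    · rw [uIoc_of_le hπ] at ht
      exact hpt t (Ioc_subset_Icc_self ht)
    · rw [sub_zero, abs_of_nonneg hπ, hQ]
      exact hρC
  have h1 : |Q * ((∫ t in 0..2 * Real.pi, q t) - Q)| ≤ Q ^ 2 / 2 := by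
    rw [abs_mul]
    calc _ ≤ |Q| * (|Q| / 2) := by gcongr
      _ = Q ^ 2 / 2 := by rw [← sq_abs Q]; ring
  have h2 := (abs_le.1 h1).1
  linarith

lemma averaged_displacement_neg {a b k ρ δ ε Q : ℝ} {u : ℝ → ℝ} (hρ : 0 < ρ) (hρk : ρ < k - 1)
    (hδ : 0 < δ)
    (hN : ∫ t in 0..2 * Real.pi, (a - Real.sin t) / (k - Real.sin t) = 2 * Real.pi * b)
    (hu : ∀ t ∈ Icc 0 (2 * Real.pi), HasDerivWithinAt u
      (δ * ((a - Real.sin t) / (u t - Real.sin t) - b)) (Icc 0 (2 * Real.pi)) t)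
    (huk : ∀ t ∈ Icc 0 (2 * Real.pi), |u t - k| ≤ ρ)
    (hu0 : ∀ t ∈ Icc 0 (2 * Real.pi), |u t - u 0| ≤ ε)
    (hQ : Q ^ 2 / 2 ≤ Q * ∫ t in 0..2 * Real.pi,
      (a - Real.sin t) / ((u t - Real.sin t) * (k - Real.sin t)))
    (hε : |Q| * ((|a| + 1) / (k - 1 - ρ) ^ 2 * ε * (2 * Real.pi)) < |u 0 - k| * (Q ^ 2 / 2)) :
    (u 0 - k) * (Q * (u (2 * Real.pi) - u 0)) < 0 := by
  set m := k - 1 - ρ with hm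
  have hm0 : 0 < m := by linarith
  have hπ : (0 : ℝ) ≤ 2 * Real.pi := by positivity
  have hum : ∀ t ∈ Icc 0 (2 * Real.pi), m ≤ u t - Real.sin t :=
    fun t ht => sub_sin_ge (huk t ht) t
  have hkm : ∀ t, m ≤ k - Real.sin t := sub_sin_ge (by simpa using hρ.le)
  have hu1 : ∀ t ∈ Icc 0 (2 * Real.pi), u t - Real.sin t ≠ 0 :=
    fun t ht => (hm0.trans_le (hum t ht)).ne'
  have hk1 : ∀ t, k - Real.sin t ≠ 0 := fun t => (hm0.trans_le (hkm t)).ne'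
  have huc : ContinuousOn u (Icc 0 (2 * Real.pi)) := fun t ht => (hu t ht).continuousWithinAt
  set q : ℝ → ℝ := fun t => (a - Real.sin t) / ((u t - Real.sin t) * (k - Real.sin t)) with hq
  have hqc : ContinuousOn q (Icc 0 (2 * Real.pi)) :=
    ContinuousOn.div (by fun_prop) (by fun_prop) fun t ht => mul_ne_zero (hu1 t ht) (hk1 t)
  have hfc : ContinuousOn (fun t => δ * ((a - Real.sin t) / (u t - Real.sin t) - b))
      (Icc 0 (2 * Real.pi)) :=
    (((ContinuousOn.div (by fun_prop) (by fun_prop) hu1)).sub continuousOn_const).const_mul δ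
  have hkc : Continuous fun t => (a - Real.sin t) / (k - Real.sin t) :=
    Continuous.div (by fun_prop) (by fun_prop) hk1
  have hdisp : u (2 * Real.pi) - u 0 =
      ∫ t in 0..2 * Real.pi, δ * ((a - Real.sin t) / (u t - Real.sin t) - b) := by
    refine (intervalIntegral.integral_eq_sub_of_hasDeriv_right_of_le hπ huc (fun t ht => ?_)
      (hfc.intervalIntegrable_of_Icc hπ)).symm
    exact ((hu t (Ioo_subset_Icc_self ht)).hasDerivAt
      (Icc_mem_nhds ht.1 ht.2)).hasDerivWithinAt
  have hzero : ∫ t in 0..2 * Real.pi, δ * ((a - Real.sin t) / (k - Real.sin t) - b) = 0 := by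
    rw [intervalIntegral.integral_const_mul, intervalIntegral.integral_sub
      (hkc.intervalIntegrable _ _) (by simp), hN]
    simp
  have hqi := hqc.intervalIntegrable_of_Icc (μ := MeasureTheory.volume) hπ
  have hri : IntervalIntegrable (fun t => q t * (u t - u 0)) MeasureTheory.volume 0
      (2 * Real.pi) := (hqc.mul (huc.sub continuousOn_const)).intervalIntegrable_of_Icc hπ
  have hki : IntervalIntegrable (fun t => δ * ((a - Real.sin t) / (k - Real.sin t) - b))
      MeasureTheory.volume 0 (2 * Real.pi) :=
    ((hkc.sub continuous_const).intervalIntegrable _ _).const_mul δ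
  have hdisp' : u (2 * Real.pi) - u 0 =
      (∫ t in 0..2 * Real.pi, δ * ((a - Real.sin t) / (u t - Real.sin t) - b)) -
        ∫ t in 0..2 * Real.pi, δ * ((a - Real.sin t) / (k - Real.sin t) - b) := by
    rw [hdisp, hzero, sub_zero]
  have hsplit : u (2 * Real.pi) - u 0 = -δ * ((u 0 - k) * (∫ t in 0..2 * Real.pi, q t) +
      ∫ t in 0..2 * Real.pi, q t * (u t - u 0)) := by
    rw [hdisp', ← intervalIntegral.integral_sub (hfc.intervalIntegrable_of_Icc hπ) hki,
      ← intervalIntegral.integral_const_mul, ← intervalIntegral.integral_add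
        (hqi.const_mul _) hri, ← intervalIntegral.integral_const_mul]
    refine intervalIntegral.integral_congr fun t ht => ?_
    rw [uIcc_of_le hπ] at ht
    have h1 := hu1 t ht
    have h2 := hk1 t
    simp only [hq]
    field_simp
    ring
  have hR : |∫ t in 0..2 * Real.pi, q t * (u t - u 0)| ≤
      (|a| + 1) / m ^ 2 * ε * (2 * Real.pi) := by
    have h := intervalIntegral.norm_integral_le_of_norm_le_const (a := 0) (b := 2 * Real.pi)
      (f := fun t => q t * (u t - u 0)) (C := (|a| + 1) / m ^ 2 * ε) fun t ht => by
        rw [uIoc_of_le hπ] at ht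
        have ht' := Ioc_subset_Icc_self ht
        rw [Real.norm_eq_abs, abs_mul]
        have h1 : |q t| ≤ _ := abs_div_mul_le (a := a) hm0 (hum t ht') (hkm t)
        have h2 := hu0 t ht'
        gcongr
    rwa [sub_zero, abs_of_nonneg hπ] at h
  set I := ∫ t in 0..2 * Real.pi, q t
  set R := ∫ t in 0..2 * Real.pi, q t * (u t - u 0)
  set e := u 0 - k
  have he : 0 < |e| := by
    by_contra! h
    have h0 : |e| = 0 := le_antisymm h (abs_nonneg e)
    rw [h0, zero_mul] at hε
    have : 0 ≤ |Q| * ((|a| + 1) / m ^ 2 * ε * (2 * Real.pi)) :=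
      mul_nonneg (abs_nonneg _) ((abs_nonneg _).trans hR)
    linarith
  have hQR : |Q * R| < |e| * (Q ^ 2 / 2) := by
    rw [abs_mul]
    exact (mul_le_mul_of_nonneg_left hR (abs_nonneg _)).trans_lt hε
  have h1 : |e * (Q * R)| < |e| * (|e| * (Q ^ 2 / 2)) := by
    rw [abs_mul]
    exact mul_lt_mul_of_pos_left hQR he
  have h2 : |e| * (|e| * (Q ^ 2 / 2)) = e ^ 2 * (Q ^ 2 / 2) := by
    rw [← sq_abs e]
    ring
  have h3 : e ^ 2 * (Q ^ 2 / 2) ≤ e ^ 2 * (Q * I) := by gcongr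
  have h4 := (abs_lt.1 h1).1
  have h5 : 0 < e ^ 2 * (Q * I) + e * (Q * R) := by linarith
  rw [hsplit]
  have : e * (Q * (-δ * (e * I + R))) = -(δ * (e ^ 2 * (Q * I) + e * (Q * R))) := by ring
  rw [this]
  exact neg_neg_of_pos (mul_pos hδ h5)

/-- First-order averaging: a simple zero `k > 1` of the averaged displacement function yields,
for large `c`, a positive limit cycle close to `x ↦ 1 / (c * (k - sin x))`. -/
theorem eventually_exists_limitCycle_near {a b k η : ℝ} (hk : 1 < k) (hη : 0 < η)
    (hN : ∫ t in 0..2 * Real.pi, (a - Real.sin t) / (k - Real.sin t) = 2 * Real.pi * b)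
    (hQ : ∫ t in 0..2 * Real.pi, (a - Real.sin t) / (k - Real.sin t) ^ 2 ≠ 0) :
    ∀ᶠ c in atTop, ∃ y : ℝ → ℝ, IsAbelLimitCycle a (b / c) c y ∧ (∀ x, 0 < y x) ∧
      |(c * y 0)⁻¹ - k| ≤ η := by
  obtain ⟨Q, hQdef⟩ : ∃ Q, ∫ t in 0..2 * Real.pi,
    (a - Real.sin t) / (k - Real.sin t) ^ 2 = Q := ⟨_, rfl⟩
  rw [hQdef] at hQ
  obtain ⟨ρ, hρ, hρη, hρk, hest⟩ := exists_radius_integral_lower_bound hk hη hQdef hQ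
  have hQ2 : 0 < Q ^ 2 := by positivity
  have hπ : (0 : ℝ) ≤ 2 * Real.pi := by positivity
  have hm0 : 0 < k - 1 - ρ := by linarith
  have hlim : ∀ A : ℝ, Tendsto (fun c : ℝ => (c ^ 2)⁻¹ * A) atTop (𝓝 0) := fun A => by
    simpa using (tendsto_inv_atTop_zero.comp (tendsto_pow_atTop two_ne_zero)).mul_const A
  have hsmall₁ := (hlim (((|a| + 1) / (k - 1 - ρ) + |b|) * (2 * Real.pi))).eventually_le_const
    (half_pos hρ)
  have hsmall₂ := (hlim (|Q| * ((|a| + 1) / (k - 1 - ρ) ^ 2 *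
    (((|a| + 1) / (k - 1 - ρ) + |b|) * (2 * Real.pi)) * (2 * Real.pi)))).eventually_lt_const
    (show 0 < ρ / 2 * (Q ^ 2 / 2) by positivity)
  filter_upwards [hsmall₁, hsmall₂, eventually_gt_atTop 0] with c h₁ h₂ hc
  have hδ : 0 < (c ^ 2)⁻¹ := by positivity
  rw [← mul_assoc] at h₁
  obtain ⟨α, hα, hαc⟩ := exists_averaged_flow hρ hρk hδ h₁
  have hαk : ∀ x ∈ Metric.closedBall k (ρ / 2), ∀ t ∈ Icc 0 (2 * Real.pi), |α x t - k| ≤ ρ := by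
    intro x hx t ht
    have h := ((hα x hx).2.2 t ht).trans h₁
    rw [Metric.mem_closedBall, Real.dist_eq] at hx
    calc |α x t - k| = |(α x t - x) + (x - k)| := by ring_nf
      _ ≤ |α x t - x| + |x - k| := abs_add_le _ _
      _ ≤ ρ := by linarith
  have hαcont : ∀ x ∈ Metric.closedBall k (ρ / 2), ContinuousOn (α x) (Icc 0 (2 * Real.pi)) :=
    fun x hx t ht => ((hα x hx).2.1 t ht).continuousWithinAt
  have hsign : ∀ x, |x - k| = ρ / 2 → (x - k) * (Q * (α x (2 * Real.pi) - x)) < 0 := by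
    intro x hx
    have hmem : x ∈ Metric.closedBall k (ρ / 2) := by
      rw [Metric.mem_closedBall, Real.dist_eq, hx]
    have h := averaged_displacement_neg (u := α x) (Q := Q)
      (ε := (c ^ 2)⁻¹ * ((|a| + 1) / (k - 1 - ρ) + |b|) * (2 * Real.pi))
      hρ hρk hδ hN (hα x hmem).2.1 (hαk x hmem)
      (by rw [(hα x hmem).1]; exact (hα x hmem).2.2)
      (hest (α x) (fun _ => k) (hαcont x hmem) continuousOn_const (hαk x hmem)
        (fun _ _ => by simpa using hρ.le))
      (by
        rw [(hα x hmem).1, hx]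
        refine lt_of_eq_of_lt ?_ h₂
        ring)
    rwa [(hα x hmem).1] at h
  obtain ⟨x, hx, hfix⟩ : ∃ x, |x - k| < ρ / 2 ∧ α x (2 * Real.pi) = x := by
    have hcont : ContinuousOn (fun x => Q * (α x (2 * Real.pi) - x))
        (Icc (k - ρ / 2) (k + ρ / 2)) := by
      rw [← Real.closedBall_eq_Icc]
      fun_prop
    have hl := hsign (k - ρ / 2) (by rw [sub_sub_cancel_left, abs_neg, abs_of_pos (half_pos hρ)])
    have hr := hsign (k + ρ / 2) (by rw [add_sub_cancel_left, abs_of_pos (half_pos hρ)])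
    rw [sub_sub_cancel_left, neg_mul, neg_lt_zero] at hl
    rw [add_sub_cancel_left] at hr
    have hl' := pos_of_mul_pos_right hl (half_pos hρ).le
    have hr' := neg_of_mul_neg_right hr (half_pos hρ).le
    obtain ⟨x, hx, hx0⟩ := intermediate_value_Ioo' (by linarith) hcont ⟨hr', hl'⟩
    refine ⟨x, abs_lt.2 ⟨by linarith [hx.1], by linarith [hx.2]⟩, ?_⟩
    exact sub_eq_zero.1 ((mul_eq_zero.1 hx0).resolve_left hQ)
  have hxmem : x ∈ Metric.closedBall k (ρ / 2) := by
    rw [Metric.mem_closedBall, Real.dist_eq]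
    exact hx.le
  have hpos : ∀ x ∈ Metric.closedBall k (ρ / 2), ∀ t ∈ Icc 0 (2 * Real.pi),
      0 < α x t - Real.sin t :=
    fun x hx t ht => hm0.trans_le (sub_sin_ge (hαk x hx t ht) t)
  have hsol : ∀ x ∈ Metric.closedBall k (ρ / 2), ∀ t ∈ Icc 0 (2 * Real.pi), HasDerivWithinAt
      (fun t => (c * (α x t - Real.sin t))⁻¹)
      (abelField a (b / c) c t (c * (α x t - Real.sin t))⁻¹) (Icc 0 (2 * Real.pi)) t :=
    fun x hx t ht => hasDerivWithinAt_abelField_of_averaged hc ((hα x hx).2.1 t ht) (hpos x hx t ht)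
  obtain ⟨y, hyd, hyT, hyeq⟩ := exists_periodic_extension Real.two_pi_pos
    (continuous_abelField a (b / c) c) (fun t x => by simp [abelField]) (hsol x hxmem)
    (by simp [hfix, (hα x hxmem).1])
  have hy : IsAbelPeriodicSolution a (b / c) c y := ⟨hyd, hyT⟩
  have hposT : ∀ {z : ℝ → ℝ}, Function.Periodic z (2 * Real.pi) →
      (∀ t ∈ Icc 0 (2 * Real.pi), 0 < z t) → ∀ t, 0 < z t := by
    intro z hzT hz t
    obtain ⟨s, hs, hts⟩ := hzT.exists_mem_Ico₀ Real.two_pi_pos t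
    rw [hts]
    exact hz s (Ico_subset_Icc_self hs)
  have hypos : ∀ t, 0 < y t := hposT hyT fun t ht => by
    rw [hyeq ht]
    exact inv_pos.2 (mul_pos hc (hpos x hxmem t ht))
  have hy0 : (c * y 0)⁻¹ = x := by
    rw [hyeq (left_mem_Icc.2 hπ)]
    simp only [(hα x hxmem).1, Real.sin_zero, sub_zero]
    field_simp
  refine ⟨y, ⟨hy, ?_⟩, hypos, by rw [hy0]; linarith⟩
  have hnear : ∀ᶠ w in 𝓝 (y 0), 0 < w ∧ |(c * w)⁻¹ - k| < ρ / 2 := by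
    have hcont : ContinuousAt (fun w => |(c * w)⁻¹ - k|) (y 0) := by
      have := (mul_pos hc (hypos 0)).ne'
      fun_prop (disch := assumption)
    exact (eventually_gt_nhds (hypos 0)).and (hcont.eventually_lt_const (by
      show |(c * y 0)⁻¹ - k| < ρ / 2
      rwa [hy0]))
  obtain ⟨ε, hε, hball⟩ := Metric.eventually_nhds_iff.1 hnear
  refine ⟨ε, hε, fun z hz hzy => ?_⟩
  obtain ⟨hz0, hzk⟩ := hball (by rwa [Real.dist_eq])
  have hzmem : (c * z 0)⁻¹ ∈ Metric.closedBall k (ρ / 2) := by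
    rw [Metric.mem_closedBall, Real.dist_eq]
    exact hzk.le
  have hzeq : EqOn z (fun t => (c * (α (c * z 0)⁻¹ t - Real.sin t))⁻¹) (Icc 0 (2 * Real.pi)) :=
    abelField_eqOn_Icc (fun t _ => (hz.1 t).hasDerivWithinAt) (hsol _ hzmem)
      (by
        simp only [(hα _ hzmem).1, Real.sin_zero, sub_zero]
        field_simp)
  have hzpos : ∀ t, 0 < z t := hposT hz.2 fun t ht => by
    rw [hzeq ht]
    exact inv_pos.2 (mul_pos hc (hpos _ hzmem t ht))
  by_cases h0 : y 0 = z 0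
  · exact (Function.Periodic.eq_of_eqOn_Icc Real.two_pi_pos hyT hz.2
      (abelField_eqOn_Icc (fun t _ => (hy.1 t).hasDerivWithinAt)
        (fun t _ => (hz.1 t).hasDerivWithinAt) h0)).symm
  · exfalso
    have hint := hy.integral_eq_zero hz hypos hzpos h0
    have hcongr : ∫ t in 0..2 * Real.pi, (a - Real.sin t) * (y t * z t) =
        (c ^ 2)⁻¹ * ∫ t in 0..2 * Real.pi, (a - Real.sin t) /
          ((α x t - Real.sin t) * (α (c * z 0)⁻¹ t - Real.sin t)) := by
      rw [← intervalIntegral.integral_const_mul]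
      refine intervalIntegral.integral_congr fun t ht => ?_
      rw [uIcc_of_le hπ] at ht
      simp only [hyeq ht, hzeq ht]
      generalize α x t - Real.sin t = A
      generalize α (c * z 0)⁻¹ t - Real.sin t = B
      simp only [div_eq_mul_inv, mul_inv, sq]
      ring
    rw [hcongr] at hint
    have hI := (mul_eq_zero.1 hint).resolve_left hδ.ne'
    have := hest (α x) (α (c * z 0)⁻¹) (hαcont x hxmem) (hαcont _ hzmem) (hαk x hxmem)
      (hαk _ hzmem)
    rw [hI, mul_zero] at this
    linarith

lemma integral_one_div_sub_sin {r : ℝ} (hr : 0 < r) (hr1 : r < 1) :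
    ∫ t in 0..2 * Real.pi, ((1 + r ^ 2) / (2 * r) - Real.sin t)⁻¹ =
      2 * Real.pi * (2 * r / (1 - r ^ 2)) := by
  have hpos : ∀ t, 0 < 1 - r * Real.sin t := fun t => by nlinarith [Real.sin_le_one t]
  have hk : ∀ t, 0 < (1 + r ^ 2) - 2 * r * Real.sin t := fun t => by
    nlinarith [Real.sin_le_one t, sq_nonneg (1 - r), mul_pos hr hr]
  have heq : ∀ t, (1 + r ^ 2) / (2 * r) - Real.sin t =
      ((1 + r ^ 2) - 2 * r * Real.sin t) / (2 * r) := fun t => by field_simp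
  have hr2 : 0 < 1 - r ^ 2 := by nlinarith
  have hd : ∀ t, HasDerivAt (fun t => 2 * r / (1 - r ^ 2) *
      (t - 2 * Real.arctan (r * Real.cos t / (1 - r * Real.sin t))))
      ((1 + r ^ 2) / (2 * r) - Real.sin t)⁻¹ t := by
    intro t
    have h := ((hasDerivAt_id t).sub ((((Real.hasDerivAt_cos t).const_mul r).div
      (((Real.hasDerivAt_sin t).const_mul r).const_sub 1) (hpos t).ne').arctan.const_mul 2)).const_mul
      (2 * r / (1 - r ^ 2))
    refine h.congr_deriv ?_
    have h1 := (hpos t).ne'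
    have h2 := (hk t).ne'
    have h3 := hr2.ne'
    have h4 : 1 + (r * Real.cos t / (1 - r * Real.sin t)) ^ 2 =
        ((1 + r ^ 2) - 2 * r * Real.sin t) / (1 - r * Real.sin t) ^ 2 := by
      field_simp
      nlinarith [Real.sin_sq_add_cos_sq t]
    have h5 : Real.cos t ^ 2 = 1 - Real.sin t ^ 2 := by
      linarith [Real.sin_sq_add_cos_sq t]
    simp only [Pi.div_apply]
    rw [h4, heq]
    field_simp
    ring_nf
    rw [h5]
    ring
  have hc : Continuous fun t => ((1 + r ^ 2) / (2 * r) - Real.sin t)⁻¹ :=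
    Continuous.inv₀ (by fun_prop) fun t => by
      rw [heq]
      exact (div_pos (hk t) (by positivity)).ne'
  rw [intervalIntegral.integral_eq_sub_of_hasDerivAt (fun t _ => hd t)
    (hc.intervalIntegrable _ _)]
  simp
  ring

lemma integral_sub_sin_div_sub_sin {a r : ℝ} (hr : 0 < r) (hr1 : r < 1) :
    ∫ t in 0..2 * Real.pi, (a - Real.sin t) / ((1 + r ^ 2) / (2 * r) - Real.sin t) =
      2 * Real.pi * (1 - ((1 + r ^ 2) / (2 * r) - a) * (2 * r / (1 - r ^ 2))) := by
  have hk : 1 < (1 + r ^ 2) / (2 * r) := by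
    rw [lt_div_iff₀ (by positivity)]
    nlinarith [mul_pos (sub_pos.2 hr1) (sub_pos.2 hr1)]
  have hi := integral_one_div_sub_sin hr hr1
  set k := (1 + r ^ 2) / (2 * r)
  have hpos : ∀ t, k - Real.sin t ≠ 0 := fun t => by linarith [Real.sin_le_one t]
  have hc : Continuous fun t => (k - Real.sin t)⁻¹ := Continuous.inv₀ (by fun_prop) hpos
  have : ∀ t, (a - Real.sin t) / (k - Real.sin t) = 1 - (k - a) * (k - Real.sin t)⁻¹ :=
    fun t => by
      have := hpos t
      field_simp
      ring
  simp_rw [this]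
  rw [intervalIntegral.integral_sub (by simp) ((hc.intervalIntegrable _ _).const_mul _),
    intervalIntegral.integral_const_mul, hi]
  simp
  ring

lemma integral_sub_sin_div_sq_ne_zero {a k : ℝ} (hk : 1 < k) (hak : a * k ≠ 1) :
    ∫ t in 0..2 * Real.pi, (a - Real.sin t) / (k - Real.sin t) ^ 2 ≠ 0 := by
  have hpos : ∀ t, 0 < k - Real.sin t := fun t => by linarith [Real.sin_le_one t]
  have hc : Continuous fun t => ((k - Real.sin t) ^ 2)⁻¹ :=
    Continuous.inv₀ (by fun_prop) fun t => (pow_pos (hpos t) 2).ne'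
  have hc' : Continuous fun t => (1 - k * Real.sin t) / (k - Real.sin t) ^ 2 :=
    Continuous.div (by fun_prop) (by fun_prop) fun t => (pow_pos (hpos t) 2).ne'
  have hd : ∀ t, HasDerivAt (fun t => Real.cos t / (k - Real.sin t))
      ((1 - k * Real.sin t) / (k - Real.sin t) ^ 2) t := fun t => by
    refine ((Real.hasDerivAt_cos t).div ((Real.hasDerivAt_sin t).const_sub k)
      (hpos t).ne').congr_deriv ?_
    congr 1
    nlinarith [Real.sin_sq_add_cos_sq t]
  have hzero : ∫ t in 0..2 * Real.pi, (1 - k * Real.sin t) / (k - Real.sin t) ^ 2 = 0 := by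
    rw [intervalIntegral.integral_eq_sub_of_hasDerivAt (fun t _ => hd t)
      (hc'.intervalIntegrable _ _)]
    simp
  have heq : ∀ t, (a - Real.sin t) / (k - Real.sin t) ^ 2 =
      (a * k - 1) / k * ((k - Real.sin t) ^ 2)⁻¹ +
        k⁻¹ * ((1 - k * Real.sin t) / (k - Real.sin t) ^ 2) := fun t => by
    have := (hpos t).ne'
    field_simp
    ring
  simp_rw [heq]
  rw [intervalIntegral.integral_add ((hc.intervalIntegrable _ _).const_mul _)
    ((hc'.intervalIntegrable _ _).const_mul _), intervalIntegral.integral_const_mul,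
    intervalIntegral.integral_const_mul, hzero, mul_zero, add_zero]
  have hI : 0 < ∫ t in 0..2 * Real.pi, ((k - Real.sin t) ^ 2)⁻¹ :=
    intervalIntegral.intervalIntegral_pos_of_pos (hc.intervalIntegrable _ _)
      (fun t => inv_pos.2 (pow_pos (hpos t) 2)) Real.two_pi_pos
  exact mul_ne_zero (div_ne_zero (sub_ne_zero.2 hak) (by linarith)) hI.ne'

/-- Sharpness of the bound: there are parameters `0 < a < 1`, `c > 0`,
`0 < b < c·√(1 − a²)` for which the Abel equation has two distinct everywhere
positive limit cycles, so the Josephson equation can have exactly two limit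
cycles of the second kind. -/
theorem abel_two_positive_limit_cycles_exist :
    ∃ a b c : ℝ, 0 < a ∧ a < 1 ∧ 0 < c ∧ 0 < b ∧ b < c * Real.sqrt (1 - a ^ 2) ∧
      ∃ y₁ y₂ : ℝ → ℝ, y₁ ≠ y₂ ∧
        IsAbelLimitCycle a b c y₁ ∧ (∀ x : ℝ, 0 < y₁ x) ∧
        IsAbelLimitCycle a b c y₂ ∧ (∀ x : ℝ, 0 < y₂ x) := by
  have h₁ := eventually_exists_limitCycle_near (a := 5 / 7) (b := 2 / 7) (k := 5 / 4)
    (η := 1 / 10) (by norm_num) (by norm_num)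
    (by
      have h := integral_sub_sin_div_sub_sin (a := 5 / 7) (r := 1 / 2) (by norm_num) (by norm_num)
      norm_num at h ⊢
      exact h)
    (integral_sub_sin_div_sq_ne_zero (by norm_num) (by norm_num))
  have h₂ := eventually_exists_limitCycle_near (a := 5 / 7) (b := 2 / 7) (k := 5 / 3)
    (η := 1 / 10) (by norm_num) (by norm_num)
    (by
      have h := integral_sub_sin_div_sub_sin (a := 5 / 7) (r := 1 / 3) (by norm_num) (by norm_num)
      norm_num at h ⊢
      exact h)
    (integral_sub_sin_div_sq_ne_zero (by norm_num) (by norm_num))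
  obtain ⟨c, ⟨y₁, hy₁, hpos₁, hk₁⟩, ⟨y₂, hy₂, hpos₂, hk₂⟩, hc⟩ :=
    (h₁.and (h₂.and (eventually_ge_atTop 1))).exists
  refine ⟨5 / 7, 2 / 7 / c, c, by norm_num, by norm_num, by linarith, by positivity, ?_, y₁, y₂,
    ?_, hy₁, hpos₁, hy₂, hpos₂⟩
  · have hs : 1 / 2 < Real.sqrt (1 - (5 / 7) ^ 2) := Real.lt_sqrt_of_sq_lt (by norm_num)
    have hc' : 2 / 7 / c ≤ 2 / 7 := div_le_self (by norm_num) hc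
    nlinarith
  · rintro rfl
    have := abs_le.1 hk₁
    have := abs_le.1 hk₂
    linarith
end
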